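/- arXiv:1503.03895 — 6 statements merged into one kernel-verified Lean document; each statement's English description precedes it below -/
import Mathlib

section
/- Let (X,d) be a metric space, G a group acting on X by isometries, x₀ ∈ X, and let S, T be countable subsets of G. Assume the word map is injective, i.e. if s₁t₁⋯s_kt_k = s′₁t′₁⋯s′_{k′}t′_{k′} with all s_i, s′_i ∈ S and t_i, t′_i ∈ T, then k = k′, s_i = s′_i and t_i = t′_i for all i. Then for every δ > 0 one has, with all sums taken in [0,∞], Σ_{γ∈G} e^{−δ d(x₀, γ·x₀)} ≥ Σ_{k≥1} ( (Σ_{s∈S} e^{−δ d(x₀, s·x₀)}) · (Σ_{t∈T} e^{−δ d(x₀, t·x₀)}) )^k. In particular, if the product (Σ_{s∈S} e^{−δ d(x₀, s·x₀)})(Σ_{t∈T} e^{−δ d(x₀, t·x₀)}) ≥ 1, then Σ_{γ∈G} e^{−δ d(x₀, γ·x₀)} = +∞. -/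
open scoped ENNReal

/-!
Expanding the `k`-th power of `∑ i, w i` gives the sum, over all words of length `k` in the letters
`i`, of the product of the weights of the letters; so the geometric series with ratio `∑ i, w i` is
a sum over the free monoid. When the letters are the pairs `(s, t)` weighted by
`e^{-δ d(x₀, s • x₀)} e^{-δ d(x₀, t • x₀)}`, the triangle inequality bounds the weight of a word by
the weight of the element it represents, and distinct words represent distinct elements.
-/

section FreeMonoid

variable {ι M : Type*} [Monoid M]

theorem tsum_pow_eq_tsum_prod (w : ι → ℝ≥0∞) (k : ℕ) :
    (∑' i, w i) ^ k = ∑' v : Fin k → ι, ∏ j, w (v j) := by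
  induction k with
  | zero => simp
  | succ k ih =>
    calc (∑' i, w i) ^ (k + 1)
        = ∑' (i) (v : Fin k → ι), w i * ∏ j, w (v j) := by
          simp_rw [pow_succ', ih, ENNReal.tsum_mul_left, ENNReal.tsum_mul_right]
      _ = ∑' p : ι × (Fin k → ι), w p.1 * ∏ j, w (p.2 j) := ENNReal.tsum_prod.symm
      _ = ∑' v : Fin (k + 1) → ι, ∏ j, w (v j) := by
          rw [← (Fin.consEquiv fun _ ↦ ι).tsum_eq]
          simp [Fin.prod_univ_succ, Fin.consEquiv]

theorem tsum_geometric_eq_tsum_freeMonoid_lift (w : ι → ℝ≥0∞) :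
    ∑' k : ℕ, (∑' i, w i) ^ k = ∑' l : FreeMonoid ι, FreeMonoid.lift w l :=
  calc ∑' k : ℕ, (∑' i, w i) ^ k
      = ∑' (k : ℕ) (v : Fin k → ι), ∏ j, w (v j) := by simp_rw [tsum_pow_eq_tsum_prod]
    _ = ∑' v : Σ k, Fin k → ι, ∏ j, w (v.2 j) :=
        (ENNReal.tsum_sigma' fun v : Σ k, Fin k → ι ↦ ∏ j, w (v.2 j)).symm
    _ = ∑' l : FreeMonoid ι, FreeMonoid.lift w l := by
        rw [← (List.equivSigmaTuple.symm.trans FreeMonoid.ofList).tsum_eq]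
        simp [List.equivSigmaTuple, List.map_ofFn, List.prod_ofFn]

theorem freeMonoid_lift_le_apply_lift {N : Type*} [CommMonoid N] [Preorder N] [IsOrderedMonoid N]
    {f : M → N} (h_one : 1 ≤ f 1) (h_mul : ∀ a b, f a * f b ≤ f (a * b))
    {g : ι → M} {w : ι → N} (hw : ∀ i, w i ≤ f (g i)) (l : FreeMonoid ι) :
    FreeMonoid.lift w l ≤ f (FreeMonoid.lift g l) := by
  induction l using FreeMonoid.inductionOn' with
  | one => simpa only [map_one] using h_one
  | of_mul i l ih =>
    simp only [map_mul, FreeMonoid.lift_eval_of]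
    exact (mul_le_mul' (hw i) ih).trans (h_mul _ _)

theorem tsum_geometric_le_tsum_of_injective_lift {f : M → ℝ≥0∞} (h_one : 1 ≤ f 1)
    (h_mul : ∀ a b, f a * f b ≤ f (a * b)) {g : ι → M}
    (hg : Function.Injective (FreeMonoid.lift g)) {w : ι → ℝ≥0∞} (hw : ∀ i, w i ≤ f (g i)) :
    ∑' k : ℕ, (∑' i, w i) ^ k ≤ ∑' m, f m :=
  calc ∑' k : ℕ, (∑' i, w i) ^ k
      = ∑' l, FreeMonoid.lift w l := tsum_geometric_eq_tsum_freeMonoid_lift w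
    _ ≤ ∑' l, f (FreeMonoid.lift g l) :=
        ENNReal.tsum_le_tsum (freeMonoid_lift_le_apply_lift h_one h_mul hw)
    _ ≤ ∑' m, f m := ENNReal.tsum_comp_le_tsum_of_injective hg f

theorem injective_freeMonoid_lift_domRestrict {W : Set ι} {g : ι → M}
    (h : ∀ l l' : List ι, (∀ i ∈ l, i ∈ W) → (∀ i ∈ l', i ∈ W) →
      (l.map g).prod = (l'.map g).prod → l = l') :
    Function.Injective (FreeMonoid.lift (W.domRestrict g)) := by
  intro l l' hl
  have mem_of_mem_map_val (m : List W) : ∀ i ∈ m.map Subtype.val, i ∈ W :=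
    List.forall_mem_map.mpr fun i _ ↦ i.2
  apply FreeMonoid.toList.injective
  apply Subtype.val_injective.list_map
  apply h _ _ (mem_of_mem_map_val _) (mem_of_mem_map_val _)
  simpa only [FreeMonoid.lift_apply, Set.domRestrict_eq, List.map_map] using hl

end FreeMonoid

theorem tsum_mul_tsum_eq_tsum_setProd {α β : Type*} (S : Set α) (T : Set β)
    (f : α → ℝ≥0∞) (g : β → ℝ≥0∞) :
    (∑' s : S, f s) * ∑' t : T, g t = ∑' p : ↥(S ×ˢ T), f p.1.1 * g p.1.2 :=
  calc (∑' s : S, f s) * ∑' t : T, g t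
      = ∑' p : S × T, f p.1 * g p.2 := by
        simp_rw [ENNReal.tsum_prod (f := fun (s : S) (t : T) ↦ f s * g t),
          ENNReal.tsum_mul_left, ENNReal.tsum_mul_right]
    _ = ∑' p : ↥(S ×ˢ T), f p.1.1 * g p.1.2 :=
        ((Equiv.Set.prod S T).tsum_eq fun p ↦ f p.1 * g p.2).symm

section PoincareSeries

variable {X M : Type*} [PseudoMetricSpace X] [Monoid M] [MulAction M X]

/-- The term `e^{-δ d(x₀, g • x₀)}` of the Poincaré series of exponent `δ` based at `x₀`, valued in
`[0, ∞]` so that no summability has to be assumed. -/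
noncomputable def poincareWeight (δ : ℝ) (x₀ : X) (g : M) : ℝ≥0∞ :=
  ENNReal.ofReal (Real.exp (-δ * dist x₀ (g • x₀)))

theorem poincareWeight_one (δ : ℝ) (x₀ : X) : poincareWeight δ x₀ (1 : M) = 1 := by
  simp [poincareWeight]

theorem dist_mul_smul_le {g : M} (hg : LipschitzWith 1 (g • · : X → X)) (h : M) (x : X) :
    dist x ((g * h) • x) ≤ dist x (g • x) + dist x (h • x) :=
  calc dist x ((g * h) • x) ≤ dist x (g • x) + dist (g • x) ((g * h) • x) := dist_triangle ..
    _ ≤ dist x (g • x) + dist x (h • x) := by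
        rw [mul_smul]
        gcongr
        simpa using hg.dist_le_mul x (h • x)

theorem poincareWeight_mul_le {δ : ℝ} (hδ : 0 ≤ δ) {g : M}
    (hg : LipschitzWith 1 (g • · : X → X)) (h : M) (x₀ : X) :
    poincareWeight δ x₀ g * poincareWeight δ x₀ h ≤ poincareWeight δ x₀ (g * h) := by
  unfold poincareWeight
  rw [← ENNReal.ofReal_mul (Real.exp_nonneg _), ← Real.exp_add, ← mul_add, neg_mul, neg_mul]
  gcongr
  exact dist_mul_smul_le hg h x₀

theorem stmt_0_general (hlip : ∀ g : M, LipschitzWith 1 (g • · : X → X)) (x₀ : X) (S T : Set M)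
    (hinj : ∀ l l' : List (M × M),
      (∀ p ∈ l, p.1 ∈ S ∧ p.2 ∈ T) → (∀ p ∈ l', p.1 ∈ S ∧ p.2 ∈ T) →
      (l.map fun p ↦ p.1 * p.2).prod = (l'.map fun p ↦ p.1 * p.2).prod → l = l')
    {δ : ℝ} (hδ : 0 ≤ δ) :
    ∑' k : ℕ, ((∑' s : S, poincareWeight δ x₀ (s : M)) *
        ∑' t : T, poincareWeight δ x₀ (t : M)) ^ (k + 1) ≤ ∑' γ : M, poincareWeight δ x₀ γ ∧
    (1 ≤ (∑' s : S, poincareWeight δ x₀ (s : M)) * ∑' t : T, poincareWeight δ x₀ (t : M) →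
      ∑' γ : M, poincareWeight δ x₀ γ = ⊤) := by
  set r := (∑' s : S, poincareWeight δ x₀ (s : M)) * ∑' t : T, poincareWeight δ x₀ (t : M) with hr
  have geometric_le : ∑' k : ℕ, r ^ k ≤ ∑' γ : M, poincareWeight δ x₀ γ := by
    rw [hr, tsum_mul_tsum_eq_tsum_setProd]
    exact tsum_geometric_le_tsum_of_injective_lift (poincareWeight_one δ x₀).ge
      (fun g h ↦ poincareWeight_mul_le hδ (hlip g) h x₀)
      (injective_freeMonoid_lift_domRestrict (W := S ×ˢ T) hinj)
      fun p ↦ poincareWeight_mul_le hδ (hlip p.1.1) p.1.2 x₀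
  refine ⟨(ENNReal.tsum_comp_le_tsum_of_injective Nat.succ_injective _).trans geometric_le, ?_⟩
  intro one_le_r
  rwa [ENNReal.tsum_geometric, tsub_eq_zero_of_le one_le_r, ENNReal.inv_zero, top_le_iff]
    at geometric_le

end PoincareSeries

/-- Abstract lower bound for the Poincaré series of a group generated by
two families `S`, `T` with injective word map (Lemma 5.2 of the paper). -/
theorem stmt_0 {X : Type*} [MetricSpace X] {G : Type*} [Group G] [MulAction G X]
    (hisom : ∀ (g : G) (x y : X), dist (g • x) (g • y) = dist x y)
    (x₀ : X) (S T : Set G) (hS : S.Countable) (hT : T.Countable)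
    (hinj : ∀ l l' : List (G × G),
      (∀ p ∈ l, p.1 ∈ S ∧ p.2 ∈ T) → (∀ p ∈ l', p.1 ∈ S ∧ p.2 ∈ T) →
      (l.map fun p => p.1 * p.2).prod = (l'.map fun p => p.1 * p.2).prod → l = l')
    (δ : ℝ) (hδ : 0 < δ) :
    (∑' k : ℕ,
        ((∑' s : S, ENNReal.ofReal (Real.exp (-δ * dist x₀ ((s : G) • x₀)))) *
         (∑' t : T, ENNReal.ofReal (Real.exp (-δ * dist x₀ ((t : G) • x₀))))) ^ (k + 1))
      ≤ ∑' γ : G, ENNReal.ofReal (Real.exp (-δ * dist x₀ (γ • x₀))) ∧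
    (1 ≤ (∑' s : S, ENNReal.ofReal (Real.exp (-δ * dist x₀ ((s : G) • x₀)))) *
         (∑' t : T, ENNReal.ofReal (Real.exp (-δ * dist x₀ ((t : G) • x₀)))) →
      (∑' γ : G, ENNReal.ofReal (Real.exp (-δ * dist x₀ (γ • x₀)))) = ⊤) :=
  stmt_0_general (fun g ↦ (Isometry.of_dist_eq (hisom g)).lipschitz) x₀ S T hinj hδ.le
end

section
/- Let (X,d) be a metric space, Γ a countable group acting on X by isometries, x₀ ∈ X, δ > 0, C ≥ 0, and let A, B be subsets of Γ. Assume that for every γ ∈ Γ there exist r ≥ 0, elements g₁,…,g_{r+1} ∈ A and p₁,…,p_r ∈ B such that γ = g₁p₁⋯g_r p_r g_{r+1} and d(x₀, γ·x₀) ≥ Σ_{i=1}^{r+1} d(x₀, g_i·x₀) + Σ_{i=1}^{r} d(x₀, p_i·x₀) − rC. Set S_A = Σ_{g∈A} e^{−δ d(x₀, g·x₀)} and S_B = Σ_{p∈B} e^{−δ d(x₀, p·x₀)} (values in [0,∞]). If S_A < ∞ and e^{Cδ} S_A S_B < 1, then Σ_{γ∈Γ} e^{−δ d(x₀, γ·x₀)}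 ≤ S_A / (1 − e^{Cδ} S_A S_B) < ∞. -/
open scoped ENNReal

/-!
Write `φ γ = exp (-δ d(x₀, γ x₀))` and `K = exp (C δ)`. Almost-additivity of the displacement says
that a decomposition `γ = g₁ p₁ ⋯ g_r p_r g_{r+1}` gives
`φ γ ≤ (∏ φ(gᵢ) (K φ(pᵢ))) φ(g_{r+1})`: the right-hand side is the same word, evaluated in
`ℝ≥0∞` after replacing each `g` by `φ g` and each `p` by `K φ p`. Every `γ` is the value of some
word, so the Poincaré series is at most the sum over all words, and by distributivity this is the
geometric series `∑ r, (S_A (K S_B)) ^ r S_A`.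
-/

universe u

theorem tsum_pi_prod_eq_prod_tsum {ι : Type*} [Fintype ι] {α : ι → Type u}
    (f : ∀ i, α i → ℝ≥0∞) : ∑' x : ∀ i, α i, ∏ i, f i (x i) = ∏ i, ∑' a, f i a := by
  refine Fintype.induction_empty_option (P := fun ι _ ↦ ∀ {α : ι → Type u} (f : ∀ i, α i → ℝ≥0∞),
    ∑' x : ∀ i, α i, ∏ i, f i (x i) = ∏ i, ∑' a, f i a) ?_ ?_ ?_ ι f
  · intro ι κ _ e ih α f
    let _ : Fintype ι := Fintype.ofEquiv κ e.symm
    simp only [← (Equiv.piCongrLeft α e).tsum_eq, ← e.prod_comp, Equiv.piCongrLeft_apply_apply, ih]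
  · simp
  · intro ι _ ih α f
    simp only [← Equiv.piOptionEquivProd.symm.tsum_eq, ENNReal.tsum_prod', Fintype.prod_option,
      Equiv.piOptionEquivProd_symm_apply, ENNReal.tsum_mul_left, ENNReal.tsum_mul_right, ih]

theorem tsum_le_tsum_of_forall_exists_fiber_le {T G : Type*} {π : T → G} {f : G → ℝ≥0∞}
    {W : T → ℝ≥0∞} (h : ∀ x, ∃ t, π t = x ∧ f x ≤ W t) : ∑' x, f x ≤ ∑' t, W t := by
  have le_tsum_fiber (x : G) : f x ≤ ∑' t : π ⁻¹' {x}, W t := by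
    obtain ⟨t, ht, hle⟩ := h x
    exact hle.trans (ENNReal.le_tsum (f := fun t : π ⁻¹' {x} ↦ W t) ⟨t, ht⟩)
  exact (ENNReal.tsum_le_tsum le_tsum_fiber).trans_eq (ENNReal.tsum_fiberwise W π)

/-- Formal words `g₁ p₁ ⋯ g_r p_r g_{r+1}` with letters `gᵢ : α` and `pᵢ : β`, encoded as the
number `r`, the `r` pairs `(gᵢ, pᵢ)`, and the last letter `g_{r+1}`. They index the decompositions
of group elements. -/
abbrev AlternatingWord (α β : Type*) :=
  Σ r : ℕ, (Fin r → α × β) × α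

namespace AlternatingWord

variable {α β : Type*}

/-- The value in a monoid of an alternating word after substituting `u` and `v` for its two kinds
of letters. It is used both in the group and, for weights, in the multiplicative monoid `ℝ≥0∞`. -/
def eval {M : Type*} [Monoid M] (u : α → M) (v : β → M) (w : AlternatingWord α β) : M :=
  (List.ofFn fun i ↦ u (w.2.1 i).1 * v (w.2.1 i).2).prod * u w.2.2

theorem eval_eq_prod {M : Type*} [CommMonoid M] (u : α → M) (v : β → M)
    (w : AlternatingWord α β) :
    w.eval u v = (∏ i, u (w.2.1 i).1 * v (w.2.1 i).2) * u w.2.2 := by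
  rw [eval, List.prod_ofFn]

theorem tsum_eval (u : α → ℝ≥0∞) (v : β → ℝ≥0∞) :
    ∑' w : AlternatingWord α β, w.eval u v = (∑' a, u a) / (1 - (∑' a, u a) * ∑' b, v b) := by
  have tsum_pair : ∑' q : α × β, u q.1 * v q.2 = (∑' a, u a) * ∑' b, v b := by
    simp only [ENNReal.tsum_prod', ENNReal.tsum_mul_left, ENNReal.tsum_mul_right]
  have tsum_words_of_length (r : ℕ) : ∑' x : (Fin r → α × β) × α,
      (∏ i, u (x.1 i).1 * v (x.1 i).2) * u x.2 =
        ((∑' a, u a) * ∑' b, v b) ^ r * ∑' a, u a := by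
    simp only [ENNReal.tsum_prod' (α := Fin r → α × β), ENNReal.tsum_mul_left,
      ENNReal.tsum_mul_right]
    rw [tsum_pi_prod_eq_prod_tsum fun (_ : Fin r) (q : α × β) ↦ u q.1 * v q.2, tsum_pair,
      Fin.prod_const]
  simp only [eval_eq_prod, ENNReal.tsum_sigma', tsum_words_of_length]
  rw [ENNReal.tsum_mul_right, ENNReal.tsum_geometric, mul_comm, div_eq_mul_inv]

end AlternatingWord

theorem ofReal_exp_add (a b : ℝ) :
    ENNReal.ofReal (Real.exp (a + b)) =
      ENNReal.ofReal (Real.exp a) * ENNReal.ofReal (Real.exp b) := by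
  rw [Real.exp_add, ENNReal.ofReal_mul (Real.exp_nonneg a)]

theorem ofReal_exp_sum {ι : Type*} (s : Finset ι) (a : ι → ℝ) :
    ENNReal.ofReal (Real.exp (∑ i ∈ s, a i)) = ∏ i ∈ s, ENNReal.ofReal (Real.exp (a i)) := by
  rw [Real.exp_sum, ENNReal.ofReal_prod_of_nonneg fun i _ ↦ Real.exp_nonneg (a i)]

theorem ofReal_exp_neg_mul_le_prod {δ C L : ℝ} (hδ : 0 ≤ δ) {r : ℕ} (a : Fin (r + 1) → ℝ)
    (b : Fin r → ℝ) (hL : ∑ i, a i + ∑ i, b i - r * C ≤ L) :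
    ENNReal.ofReal (Real.exp (-δ * L)) ≤
      (∏ i : Fin r, ENNReal.ofReal (Real.exp (-δ * a i.castSucc)) *
        (ENNReal.ofReal (Real.exp (C * δ)) * ENNReal.ofReal (Real.exp (-δ * b i)))) *
      ENNReal.ofReal (Real.exp (-δ * a (Fin.last r))) := by
  simp only [← ofReal_exp_add, ← ofReal_exp_sum]
  gcongr
  calc -δ * L ≤ -δ * (∑ i, a i + ∑ i, b i - r * C) :=
        mul_le_mul_of_nonpos_left hL (neg_nonpos.2 hδ)
    _ = ∑ i : Fin r, (-δ * a i.castSucc + (C * δ + -δ * b i)) + -δ * a (Fin.last r) := by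
        simp only [Fin.sum_univ_castSucc, Finset.sum_add_distrib, ← Finset.mul_sum, Fin.sum_const,
          nsmul_eq_mul]
        ring

theorem stmt_1_general {M : Type*} [Monoid M] (ℓ : M → ℝ) {δ C : ℝ} (hδ : 0 ≤ δ) (A B : Set M)
    (hdec : ∀ γ : M, ∃ (r : ℕ) (g : Fin (r + 1) → M) (p : Fin r → M),
      (∀ i, g i ∈ A) ∧ (∀ i, p i ∈ B) ∧
      γ = (List.ofFn fun i : Fin r => g i.castSucc * p i).prod * g (Fin.last r) ∧
      (∑ i, ℓ (g i)) + (∑ i, ℓ (p i)) - r * C ≤ ℓ γ)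
    {SA SB : ℝ≥0∞}
    (hSA : SA = ∑' g : A, ENNReal.ofReal (Real.exp (-δ * ℓ g)))
    (hSB : SB = ∑' p : B, ENNReal.ofReal (Real.exp (-δ * ℓ p)))
    (hSAfin : SA < ⊤)
    (hsmall : ENNReal.ofReal (Real.exp (C * δ)) * SA * SB < 1) :
    (∑' γ : M, ENNReal.ofReal (Real.exp (-δ * ℓ γ))) ≤
      SA / (1 - ENNReal.ofReal (Real.exp (C * δ)) * SA * SB) ∧
    (∑' γ : M, ENNReal.ofReal (Real.exp (-δ * ℓ γ))) < ⊤ := by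
  set K := ENNReal.ofReal (Real.exp (C * δ))
  let φ (γ : M) : ℝ≥0∞ := ENNReal.ofReal (Real.exp (-δ * ℓ γ))
  have exists_word (γ : M) : ∃ w : AlternatingWord A B,
      w.eval (↑) (↑) = γ ∧ φ γ ≤ w.eval (fun g : A ↦ φ g) (fun p : B ↦ K * φ p) := by
    obtain ⟨r, g, p, hg, hp, hγ, hℓ⟩ := hdec γ
    refine ⟨⟨r, fun i ↦ (⟨g i.castSucc, hg _⟩, ⟨p i, hp i⟩), ⟨g (Fin.last r), hg _⟩⟩, hγ.symm, ?_⟩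
    rw [AlternatingWord.eval_eq_prod]
    exact ofReal_exp_neg_mul_le_prod hδ (fun i ↦ ℓ (g i)) (fun i ↦ ℓ (p i)) hℓ
  have tsum_words : ∑' w : AlternatingWord A B, w.eval (fun g : A ↦ φ g) (fun p : B ↦ K * φ p) =
      SA / (1 - K * SA * SB) := by
    rw [AlternatingWord.tsum_eval, ENNReal.tsum_mul_left, ← hSA, ← hSB, mul_left_comm, mul_assoc]
  have hle : ∑' γ, φ γ ≤ SA / (1 - K * SA * SB) :=
    (tsum_le_tsum_of_forall_exists_fiber_le exists_word).trans_eq tsum_words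
  exact ⟨hle, hle.trans_lt (ENNReal.div_lt_top hSAfin.ne (tsub_pos_of_lt hsmall).ne')⟩

/-- Abstract convergence criterion for a Poincaré series via a
horospherical decomposition (engine of Theorem 1.2 of the paper). -/
theorem stmt_1 {X : Type*} [MetricSpace X] {Γ : Type*} [Group Γ] [Countable Γ] [MulAction Γ X]
    (hisom : ∀ (g : Γ) (x y : X), dist (g • x) (g • y) = dist x y)
    (x₀ : X) (δ C : ℝ) (hδ : 0 < δ) (hC : 0 ≤ C) (A B : Set Γ)
    (hdec : ∀ γ : Γ, ∃ (r : ℕ) (g : Fin (r + 1) → Γ) (p : Fin r → Γ),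
      (∀ i, g i ∈ A) ∧ (∀ i, p i ∈ B) ∧
      γ = (List.ofFn fun i : Fin r => g i.castSucc * p i).prod * g (Fin.last r) ∧
      (∑ i, dist x₀ (g i • x₀)) + (∑ i, dist x₀ (p i • x₀)) - r * C ≤ dist x₀ (γ • x₀))
    (SA SB : ℝ≥0∞)
    (hSA : SA = ∑' g : A, ENNReal.ofReal (Real.exp (-δ * dist x₀ ((g : Γ) • x₀))))
    (hSB : SB = ∑' p : B, ENNReal.ofReal (Real.exp (-δ * dist x₀ ((p : Γ) • x₀))))
    (hSAfin : SA < ⊤)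
    (hsmall : ENNReal.ofReal (Real.exp (C * δ)) * SA * SB < 1) :
    (∑' γ : Γ, ENNReal.ofReal (Real.exp (-δ * dist x₀ (γ • x₀)))) ≤
      SA / (1 - ENNReal.ofReal (Real.exp (C * δ)) * SA * SB) ∧
    (∑' γ : Γ, ENNReal.ofReal (Real.exp (-δ * dist x₀ (γ • x₀)))) < ⊤ :=
  stmt_1_general (fun γ ↦ dist x₀ (γ • x₀)) hδ.le A B hdec hSA hSB hSAfin hsmall
end

section
/- Let μ be a Borel probability measure on ℝ with μ([0,∞)) = 1, let F(t) = μ([0,t]) and m(t) = ∫₀ᵗ (1 − F(s)) ds. Let κ ∈ (0,1) and let L be a slowly varying function, and assume that 1 − F(t) ~ L(t)/t^κ as t → ∞. Then t(1 − F(t))/m(t) → 1 − κ as t → ∞. -/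
open MeasureTheory Filter

/-!
Substituting `s = t * u` gives `(∫ s in 0..t, f s) / (t * f t) = ∫ u in 0..1, f (t * u) / f t`, and
for `f` regularly varying of index `ρ` the integrand tends to `u ^ ρ` pointwise. When `f` is
moreover nonincreasing, iterating a bound on `f (l * t) / f t` for a single `l < 1` dominates the
integrand by `C * u ^ σ` with `-1 < σ < ρ`, so the integral tends to
`∫ u in 0..1, u ^ ρ = 1 / (ρ + 1)`.
-/

open scoped Topology Asymptotics

/-- Regular variation of index `ρ` at infinity; index `0` is slow variation. Positivity is only
asked for near infinity, and measurability is not part of the definition. -/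
structure IsRegularlyVarying (f : ℝ → ℝ) (ρ : ℝ) : Prop where
  eventually_pos : ∀ᶠ t in atTop, 0 < f t
  tendsto_div : ∀ c > 0, Tendsto (fun t => f (c * t) / f t) atTop (𝓝 (c ^ ρ))

namespace IsRegularlyVarying

variable {f g : ℝ → ℝ} {ρ σ : ℝ}

theorem mul (hf : IsRegularlyVarying f ρ) (hg : IsRegularlyVarying g σ) :
    IsRegularlyVarying (fun t => f t * g t) (ρ + σ) where
  eventually_pos := by
    filter_upwards [hf.eventually_pos, hg.eventually_pos] with t hft hgt using mul_pos hft hgt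
  tendsto_div c hc := by
    simpa only [Real.rpow_add hc, mul_div_mul_comm] using
      (hf.tendsto_div c hc).mul (hg.tendsto_div c hc)

theorem congr (hg : IsRegularlyVarying g ρ) (h : f ~[atTop] g) : IsRegularlyVarying f ρ where
  eventually_pos := h.eventually_pos hg.eventually_pos
  tendsto_div c hc :=
    ((h.comp_tendsto (tendsto_id.const_mul_atTop hc)).div h).symm.tendsto_nhds (hg.tendsto_div c hc)

end IsRegularlyVarying

theorem isRegularlyVarying_rpow (ρ : ℝ) : IsRegularlyVarying (fun t => t ^ ρ) ρ where
  eventually_pos := by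
    filter_upwards [eventually_gt_atTop 0] with t ht using Real.rpow_pos_of_pos ht ρ
  tendsto_div c hc := by
    refine tendsto_const_nhds.congr' ?_
    filter_upwards [eventually_gt_atTop 0] with t ht
    rw [Real.mul_rpow hc.le ht.le, mul_div_cancel_right₀ _ (Real.rpow_pos_of_pos ht ρ).ne']

theorem IsRegularlyVarying.of_tendsto_div_div_rpow {f L : ℝ → ℝ} {ρ κ : ℝ}
    (hL : IsRegularlyVarying L ρ)
    (h : Tendsto (fun t => f t / (L t / t ^ κ)) atTop (𝓝 1)) :
    IsRegularlyVarying f (ρ - κ) := by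
  have hdiv : (fun t => L t / t ^ κ) =ᶠ[atTop] fun t => L t * t ^ (-κ) := by
    filter_upwards [eventually_ge_atTop 0] with t ht
    rw [Real.rpow_neg ht, div_eq_mul_inv]
  rw [sub_eq_add_neg]
  exact (hL.mul (isRegularlyVarying_rpow (-κ))).congr
    ((Asymptotics.isEquivalent_of_tendsto_one h).congr_right hdiv)

theorem pos_of_antitoneOn_of_eventually_pos {α β : Type*} [LinearOrder α] [Preorder β] [Zero β]
    {f : α → β} {a t : α} (hf : AntitoneOn f (Set.Ici a)) (hpos : ∀ᶠ s in atTop, 0 < f s)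
    (ht : a ≤ t) : 0 < f t := by
  have : Nonempty α := ⟨t⟩
  obtain ⟨s, hs, hts⟩ := (hpos.and (eventually_ge_atTop t)).exists
  exact hs.trans_le (hf ht (ht.trans hts) hts)

section Antitone

variable {f : ℝ → ℝ} {ρ σ l T : ℝ}

theorem nonpos_of_antitoneOn_of_le_rpow_mul (hf : AntitoneOn f (Set.Ici 0)) (hl : 0 < l)
    (hl1 : l < 1) (hT : 0 ≤ T) (hpos : 0 < f T) (hstep : f (l * T) ≤ l ^ σ * f T) : σ ≤ 0 := by
  by_contra! hσ
  have hmono : f T ≤ f (l * T) :=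
    hf (mul_nonneg hl.le hT) hT (mul_le_of_le_one_left hT hl1.le)
  have hlt : l ^ σ * f T < f T := mul_lt_of_lt_one_left hpos (Real.rpow_lt_one hl.le hl1 hσ)
  exact (hmono.trans hstep).not_gt hlt

theorem le_rpow_mul_of_step {C : ℝ} (hl : 0 < l) (hl1 : l < 1) (hC : 0 ≤ C)
    (hstep : ∀ t, T ≤ t → f (l * t) ≤ l ^ σ * f t)
    (hbase : ∀ t, T ≤ t → ∀ u ∈ Set.Ioc (0 : ℝ) 1, l ≤ u ∨ l * t ≤ T →
      f (t * u) ≤ C * u ^ σ * f t)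
    {t u : ℝ} (ht : T ≤ t) (hu : u ∈ Set.Ioc (0 : ℝ) 1) : f (t * u) ≤ C * u ^ σ * f t := by
  obtain ⟨n, hn⟩ := exists_pow_lt_of_lt_one hu.1 hl1
  replace hn := hn.le
  induction n generalizing t u with
  | zero => exact hbase t ht u hu (.inl (hl1.le.trans (by simpa only [pow_zero] using hn)))
  | succ n ih =>
    by_cases hcase : l ≤ u ∨ l * t ≤ T
    · exact hbase t ht u hu hcase
    -- Replacing `(t, u)` by `(l * t, u / l)` keeps `t * u` and costs one use of `hstep`.
    obtain ⟨hul, hlt⟩ : u < l ∧ T < l * t := by simpa only [not_or, not_le] using hcase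
    have hul_mem : u / l ∈ Set.Ioc (0 : ℝ) 1 := ⟨div_pos hu.1 hl, (div_le_one hl).2 hul.le⟩
    have hn_div : l ^ n ≤ u / l := (le_div_iff₀ hl).2 (by rwa [← pow_succ])
    calc f (t * u) = f (l * t * (u / l)) := by congr 1; field_simp
      _ ≤ C * (u / l) ^ σ * f (l * t) := ih hlt.le hul_mem hn_div
      _ ≤ C * (u / l) ^ σ * (l ^ σ * f t) :=
        mul_le_mul_of_nonneg_left (hstep t ht) (mul_nonneg hC (Real.rpow_nonneg hul_mem.1.le σ))
      _ = C * u ^ σ * f t := by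
        rw [Real.div_rpow hu.1.le hl.le]
        have hlσ : l ^ σ ≠ 0 := (Real.rpow_pos_of_pos hl σ).ne'
        field_simp

theorem exists_le_rpow_mul_of_step_of_antitoneOn (hf : AntitoneOn f (Set.Ici 0))
    (hpos : ∀ t, 0 ≤ t → 0 < f t) (hl : 0 < l) (hl1 : l < 1) (hT : 0 ≤ T)
    (hstep : ∀ t, T ≤ t → f (l * t) ≤ l ^ σ * f t) :
    ∃ C, ∀ t, T ≤ t → ∀ u ∈ Set.Ioc (0 : ℝ) 1, f (t * u) ≤ C * u ^ σ * f t := by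
  have hσ : σ ≤ 0 :=
    nonpos_of_antitoneOn_of_le_rpow_mul hf hl hl1 hT (hpos T hT) (hstep T le_rfl)
  have hTl : 0 ≤ T / l := div_nonneg hT hl.le
  set C := max (l ^ σ) (f 0 / f (T / l))
  have hC : 0 ≤ C := (Real.rpow_nonneg hl.le σ).trans (le_max_left _ _)
  refine ⟨C, fun t ht u hu => le_rpow_mul_of_step hl hl1 hC hstep ?_ ht hu⟩
  intro t ht u hu hcase
  have ht0 : 0 ≤ t := hT.trans ht
  have htu : 0 ≤ t * u := mul_nonneg ht0 hu.1.le
  have hCf : f (t * u) ≤ C * f t := by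
    rcases hcase with hlu | hlt
    · calc f (t * u) ≤ f (l * t) := hf (mul_nonneg hl.le ht0) htu (by rw [mul_comm l]; gcongr)
        _ ≤ l ^ σ * f t := hstep t ht
        _ ≤ C * f t := mul_le_mul_of_nonneg_right (le_max_left _ _) (hpos t ht0).le
    · calc f (t * u) ≤ f 0 := hf Set.self_mem_Ici htu htu
        _ = f 0 / f (T / l) * f (T / l) := (div_mul_cancel₀ _ (hpos _ hTl).ne').symm
        _ ≤ C * f t :=
          mul_le_mul (le_max_right _ _) (hf ht0 hTl ((le_div_iff₀' hl).2 hlt)) (hpos _ hTl).le hC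
  exact hCf.trans (mul_le_mul_of_nonneg_right
    (le_mul_of_one_le_right hC (Real.one_le_rpow_of_pos_of_le_one_of_nonpos hu.1 hu.2 hσ))
    (hpos t ht0).le)

theorem IsRegularlyVarying.exists_eventually_le_rpow_mul_of_antitoneOn
    (hreg : IsRegularlyVarying f ρ) (hf : AntitoneOn f (Set.Ici 0)) (hσ : σ < ρ) :
    ∃ C, ∀ᶠ t in atTop, ∀ u ∈ Set.Ioc (0 : ℝ) 1, f (t * u) ≤ C * u ^ σ * f t := by
  have hpos (t : ℝ) (ht : 0 ≤ t) : 0 < f t :=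
    pos_of_antitoneOn_of_eventually_pos hf hreg.eventually_pos ht
  have hhalf : (0 : ℝ) < 1 / 2 ∧ (1 / 2 : ℝ) < 1 := by norm_num
  have hlt : (1 / 2 : ℝ) ^ ρ < (1 / 2) ^ σ :=
    Real.rpow_lt_rpow_of_exponent_gt hhalf.1 hhalf.2 hσ
  obtain ⟨T, hT⟩ := eventually_atTop.1
    (((hreg.tendsto_div _ hhalf.1).eventually_lt_const hlt).and (eventually_ge_atTop 0))
  have hstep (t : ℝ) (ht : T ≤ t) : f (1 / 2 * t) ≤ (1 / 2) ^ σ * f t :=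
    ((div_lt_iff₀ (hpos t (hT t ht).2)).1 (hT t ht).1).le
  obtain ⟨C, hC⟩ := exists_le_rpow_mul_of_step_of_antitoneOn hf hpos hhalf.1 hhalf.2
    (hT T le_rfl).2 hstep
  exact ⟨C, (eventually_ge_atTop T).mono hC⟩

theorem IsRegularlyVarying.tendsto_integral_div_of_antitoneOn (hreg : IsRegularlyVarying f ρ)
    (hρ : -1 < ρ) (hf : AntitoneOn f (Set.Ici 0)) :
    Tendsto (fun t => ∫ u in (0 : ℝ)..1, f (t * u) / f t) atTop (𝓝 (1 / (ρ + 1))) := by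
  obtain ⟨σ, hσ, hσρ⟩ := exists_between hρ
  obtain ⟨C, hC⟩ := hreg.exists_eventually_le_rpow_mul_of_antitoneOn hf hσρ
  have hlim : ∫ u in (0 : ℝ)..1, u ^ ρ = 1 / (ρ + 1) := by
    rw [integral_rpow (Or.inl hρ), Real.one_rpow, Real.zero_rpow (by linarith), sub_zero]
  rw [← hlim]
  refine intervalIntegral.tendsto_integral_filter_of_dominated_convergence
    (fun u => C * u ^ σ) ?meas ?bound
    ((intervalIntegral.intervalIntegrable_rpow' hσ).const_mul C) ?lim
  case meas =>
    filter_upwards [eventually_ge_atTop 0] with t ht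
    have hanti : AntitoneOn (fun u => f (t * u)) (Set.uIoc 0 1) := fun u hu v hv huv => by
      rw [Set.uIoc_of_le zero_le_one] at hu hv
      exact hf (mul_nonneg ht hu.1.le) (mul_nonneg ht hv.1.le) (mul_le_mul_of_nonneg_left huv ht)
    exact ((aemeasurable_restrict_of_antitoneOn measurableSet_uIoc hanti).div_const
      (f t)).aestronglyMeasurable
  case bound =>
    filter_upwards [hC, eventually_ge_atTop 0] with t hCt ht
    refine .of_forall fun u hu => ?_
    rw [Set.uIoc_of_le zero_le_one] at hu
    have hpos {s : ℝ} (hs : 0 ≤ s) : 0 < f s :=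
      pos_of_antitoneOn_of_eventually_pos hf hreg.eventually_pos hs
    rw [Real.norm_of_nonneg (div_pos (hpos (mul_nonneg ht hu.1.le)) (hpos ht)).le,
      div_le_iff₀ (hpos ht)]
    exact hCt u hu
  case lim =>
    refine .of_forall fun u hu => ?_
    rw [Set.uIoc_of_le zero_le_one] at hu
    simpa only [mul_comm u] using hreg.tendsto_div u hu.1

end Antitone

theorem antitone_one_sub_measureReal_Icc (μ : Measure ℝ) [IsFiniteMeasure μ] (a : ℝ) :
    Antitone fun t => 1 - μ.real (Set.Icc a t) := fun s t hst =>
  sub_le_sub_left (measureReal_mono (Set.Icc_subset_Icc_right hst)) 1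

theorem stmt_3_general {f : ℝ → ℝ} {ρ : ℝ} (hreg : IsRegularlyVarying f ρ) (hρ : -1 < ρ)
    (hf : AntitoneOn f (Set.Ici 0)) :
    Tendsto (fun t => t * f t / ∫ s in (0 : ℝ)..t, f s) atTop (𝓝 (1 + ρ)) := by
  have hinv := (hreg.tendsto_integral_div_of_antitoneOn hρ hf).inv₀
    (one_div_pos.2 (by linarith)).ne'
  rw [one_div, inv_inv, add_comm] at hinv
  refine hinv.congr' ?_
  filter_upwards [eventually_ne_atTop 0] with t ht
  rw [intervalIntegral.integral_div, intervalIntegral.integral_comp_mul_left f ht, mul_zero,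
    mul_one, smul_eq_mul, inv_div, div_mul_eq_div_div_swap, div_inv_eq_mul, div_mul_eq_mul_div,
    mul_comm]

/-- Karamata-type consequence of a heavy tail:
`t(1-F(t))/m(t) → 1-κ` (estimate (6.2) of the paper). -/
theorem stmt_3 (μ : Measure ℝ) [IsProbabilityMeasure μ] (hμ : μ (Set.Ici 0) = 1)
    (F m : ℝ → ℝ)
    (hF : ∀ t, F t = (μ (Set.Icc 0 t)).toReal)
    (hm : ∀ t, m t = ∫ s in (0:ℝ)..t, (1 - F s))
    (κ : ℝ) (hκ : κ ∈ Set.Ioo (0:ℝ) 1)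
    (L : ℝ → ℝ) (hLpos : ∀ t > 0, 0 < L t) (hLmeas : Measurable L)
    (hLslow : ∀ lam > 0, Tendsto (fun t => L (lam * t) / L t) atTop (nhds 1))
    (htail : Tendsto (fun t => (1 - F t) / (L t / t ^ κ)) atTop (nhds 1)) :
    Tendsto (fun t => t * (1 - F t) / m t) atTop (nhds (1 - κ)) := by
  have hL : IsRegularlyVarying L 0 :=
    ⟨(eventually_gt_atTop 0).mono hLpos, by simpa only [Real.rpow_zero] using hLslow⟩
  have hreg : IsRegularlyVarying (fun t => 1 - F t) (-κ) := by
    simpa only [zero_sub] using hL.of_tendsto_div_div_rpow htail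
  have hanti : Antitone fun t => 1 - F t := by
    simpa only [hF, measureReal_def] using antitone_one_sub_measureReal_Icc μ 0
  simpa only [hm, sub_eq_add_neg] using
    stmt_3_general hreg (neg_lt_neg hκ.2) (hanti.antitoneOn _)
end

section
/- Let μ be a Borel probability measure on ℝ with μ([0,∞)) = 1, let F(t) = μ([0,t]). Let κ ∈ (0,1) and let L be a slowly varying function, and assume that 1 − F(t) ~ L(t)/t^κ as t → ∞. Then the characteristic function μ̂(t) = ∫₀^∞ e^{itx} μ(dx) satisfies, as t → 0⁺, μ̂(t) = 1 − e^{−iπκ/2} Γ(1−κ) t^κ L(1/t) (1 + o(1)); equivalently, (1 − μ̂(t)) / (t^κ L(1/t)) → e^{−iπκ/2} Γ(1−κ) as t → 0⁺, where Γ is Euler's Gamma function. -/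
open MeasureTheory Filter

/-! Let `G` be the tail of `μ`. For a bounded Lipschitz `φ` with `φ 0 = 0`, cutting `φ` off at level
`M` and integrating over the layers of `μ` gives
`∫ φ (min (x / y) M) dμ = ∫₀ᴹ G (u y) φ'(u) du`. Divided by `G y`, the integrand tends to
`u ^ (-κ) φ'(u)`, under Potter's bound `O(u ^ (-ρ))` with `κ < ρ < 1` near `u = 0`. The error of the
cut-off is at most `2 sup ‖φ‖ G (M y) / G y`, which is small for large `M` uniformly in large `y`.
Hence `∫ φ (x / y) dμ / G y → κ ∫₀^∞ u ^ (-κ - 1) φ(u) du`. Since the limit converges absolutely,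
one can take `φ(u) = 1 - exp (-z u)` on the whole closed half-plane `0 ≤ re z`, where the limit is
`Γ(1 - κ) z ^ κ` by analytic continuation from `z > 0`; the characteristic function is `z = -i`.
-/

section

open Set Topology Real

/-- A real function `f` is regularly varying at `∞` with index `ρ` if `f (c x) / f x → c ^ ρ` for
every `c > 0`; index `0` is slow variation. No measurability or sign condition is built in, so that
the notion applies verbatim to tails of measures. -/
def RegularlyVarying (f : ℝ → ℝ) (ρ : ℝ) : Prop :=
  ∀ c > 0, Tendsto (fun x => f (c * x) / f x) atTop (𝓝 (c ^ ρ))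

namespace RegularlyVarying

variable {f g : ℝ → ℝ} {ρ σ : ℝ}

lemma rpow (ρ : ℝ) : RegularlyVarying (fun x => x ^ ρ) ρ := by
  intro c hc
  refine tendsto_const_nhds.congr' ?_
  filter_upwards [eventually_gt_atTop 0] with x hx
  rw [mul_rpow hc.le hx.le, mul_div_cancel_right₀ _ (rpow_pos_of_pos hx ρ).ne']

lemma div (hf : RegularlyVarying f ρ) (hg : RegularlyVarying g σ) :
    RegularlyVarying (fun x => f x / g x) (ρ - σ) := by
  intro c hc
  rw [rpow_sub hc]
  exact ((hf c hc).div (hg c hc) (rpow_pos_of_pos hc σ).ne').congr fun x => div_div_div_comm ..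

lemma of_tendsto_div (hg : RegularlyVarying g ρ)
    (hfg : Tendsto (fun x => f x / g x) atTop (𝓝 1)) : RegularlyVarying f ρ := by
  intro c hc
  have hscale : Tendsto (fun x : ℝ => c * x) atTop atTop := tendsto_id.const_mul_atTop hc
  have hlim := ((hfg.comp hscale).mul (hg c hc)).div hfg one_ne_zero
  rw [one_mul, div_one] at hlim
  have hne : ∀ᶠ x in atTop, f x / g x ≠ 0 := hfg.eventually_ne one_ne_zero
  refine hlim.congr' ?_
  filter_upwards [hne, hscale.eventually hne] with x hx hcx
  have hgx : g x ≠ 0 := (div_ne_zero_iff.1 hx).2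
  have hgcx : g (c * x) ≠ 0 := (div_ne_zero_iff.1 hcx).2
  have hfx : f x ≠ 0 := (div_ne_zero_iff.1 hx).1
  simp only [Pi.div_apply, Function.comp_apply]
  field_simp

lemma pos_of_antitone (hf : RegularlyVarying f ρ) (hanti : Antitone f) (hnonneg : ∀ x, 0 ≤ f x)
    (x : ℝ) : 0 < f x := by
  have hone : Tendsto (fun y => f y / f y) atTop (𝓝 1) := by
    simpa only [one_mul, one_rpow] using hf 1 one_pos
  obtain ⟨y, hy, hxy⟩ := ((hone.eventually_ne one_ne_zero).and (eventually_ge_atTop x)).exists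
  exact ((hnonneg y).lt_of_ne' (div_ne_zero_iff.1 hy).1).trans_le (hanti hxy)

variable {α : ℝ}

lemma eventually_le_mul_two_mul (hf : RegularlyVarying f (-α)) (hpos : ∀ x, 0 < f x)
    (hρ : α < ρ) : ∀ᶠ x in atTop, f x ≤ 2 ^ ρ * f (2 * x) := by
  have hlt : (2 : ℝ) ^ (-ρ) < 2 ^ (-α) := rpow_lt_rpow_of_exponent_lt one_lt_two (neg_lt_neg hρ)
  filter_upwards [(hf 2 two_pos).eventually_const_lt hlt] with x hx
  rw [rpow_neg two_pos.le, lt_div_iff₀ (hpos x), inv_mul_lt_iff₀ (by positivity)] at hx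
  exact hx.le

/-- Potter's bound: iterate the estimate for doubling over a dyadic scale. -/
lemma exists_forall_ge_le_mul_rpow (hf : RegularlyVarying f (-α)) (hanti : Antitone f)
    (hpos : ∀ x, 0 < f x) (hρ0 : 0 ≤ ρ) (hρ : α < ρ) :
    ∃ X > 0, ∀ x ≥ X, ∀ y ≥ x, f x ≤ 2 ^ ρ * (y / x) ^ ρ * f y := by
  obtain ⟨X, hX⟩ := eventually_atTop.1 (hf.eventually_le_mul_two_mul hpos hρ)
  refine ⟨max X 1, by positivity, fun x hx y hxy => ?_⟩
  have hx0 : 0 < x := one_pos.trans_le ((le_max_right X 1).trans hx)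
  have hdouble (n : ℕ) : f x ≤ (2 ^ ρ) ^ n * f (2 ^ n * x) := by
    induction n with
    | zero => simp
    | succ n ih =>
      have hge : X ≤ 2 ^ n * x :=
        ((le_max_left X 1).trans hx).trans (le_mul_of_one_le_left hx0.le (one_le_pow₀ one_le_two))
      calc f x ≤ (2 ^ ρ) ^ n * f (2 ^ n * x) := ih
        _ ≤ (2 ^ ρ) ^ n * (2 ^ ρ * f (2 * (2 ^ n * x))) := by gcongr; exact hX _ hge
        _ = (2 ^ ρ) ^ (n + 1) * f (2 ^ (n + 1) * x) := by ring_nf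
  obtain ⟨n, hn, hn'⟩ := exists_nat_pow_near ((one_le_div hx0).2 hxy) (one_lt_two : (1 : ℝ) < 2)
  calc f x ≤ (2 ^ ρ) ^ (n + 1) * f (2 ^ (n + 1) * x) := hdouble (n + 1)
    _ ≤ (2 ^ ρ) ^ (n + 1) * f y := by
      gcongr
      exact hanti ((div_lt_iff₀ hx0).1 hn').le
    _ = 2 ^ ρ * (2 ^ n) ^ ρ * f y := by
      rw [pow_succ', ← rpow_natCast, ← rpow_natCast, ← rpow_mul two_pos.le, mul_comm ρ,
        rpow_mul two_pos.le]
    _ ≤ 2 ^ ρ * (y / x) ^ ρ * f y := by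
      have := (hpos y).le
      gcongr

lemma exists_eventually_forall_div_le (hf : RegularlyVarying f (-α)) (hanti : Antitone f)
    (hpos : ∀ x, 0 < f x) (hρ0 : 0 ≤ ρ) (hρ : α < ρ) :
    ∃ K, ∀ᶠ y in atTop, ∀ u > 0, f (u * y) / f y ≤ K * u ^ (-ρ) + 1 := by
  obtain ⟨X, hX0, hX⟩ := hf.exists_forall_ge_le_mul_rpow hanti hpos hρ0 hρ
  have hf0 := hpos 0
  have hfX := hpos X
  refine ⟨f 0 / f X * 2 ^ ρ, ?_⟩
  filter_upwards [eventually_ge_atTop X] with y hy u hu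
  have hy0 : 0 < y := hX0.trans_le hy
  have hfy := hpos y
  rcases le_total 1 u with hu1 | hu1
  · calc f (u * y) / f y ≤ 1 := (div_le_one hfy).2 (hanti (le_mul_of_one_le_left hy0.le hu1))
      _ ≤ f 0 / f X * 2 ^ ρ * u ^ (-ρ) + 1 := le_add_of_nonneg_left (by positivity)
  set m := max (u * y) X
  have hm0 : 0 < m := hX0.trans_le (le_max_right ..)
  have hfm : f (u * y) ≤ f 0 / f X * f m := by
    rw [div_mul_eq_mul_div, le_div_iff₀ hfX]
    rcases le_total (u * y) X with h | h
    · rw [show m = X from max_eq_right h]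
      exact mul_le_mul_of_nonneg_right (hanti (by positivity)) hfX.le
    · rw [show m = u * y from max_eq_left h, mul_comm]
      exact mul_le_mul_of_nonneg_right (hanti hX0.le) (hpos _).le
  have hym : y / m ≤ u⁻¹ := by
    rw [div_le_iff₀ hm0, ← div_eq_inv_mul, le_div_iff₀ hu, mul_comm]
    exact le_max_left ..
  rw [div_le_iff₀ hfy]
  calc f (u * y) ≤ f 0 / f X * f m := hfm
    _ ≤ f 0 / f X * (2 ^ ρ * (y / m) ^ ρ * f y) := by
      gcongr
      exact hX m (le_max_right ..) y (max_le (mul_le_of_le_one_left hy0.le hu1) hy)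
    _ ≤ f 0 / f X * (2 ^ ρ * u ^ (-ρ) * f y) := by
      rw [rpow_neg hu.le, ← inv_rpow hu.le]
      gcongr
    _ ≤ (f 0 / f X * 2 ^ ρ * u ^ (-ρ) + 1) * f y := by linarith

variable {E : Type*} [NormedAddCommGroup E] [NormedSpace ℝ E]

lemma tendsto_intervalIntegral (hf : RegularlyVarying f (-α)) (hanti : Antitone f)
    (hpos : ∀ x, 0 < f x) (hα0 : 0 ≤ α) (hα1 : α < 1) {M C : ℝ} {g : ℝ → E} (hM : 0 ≤ M)
    (hg : AEStronglyMeasurable g (volume.restrict (Ioc 0 M))) (hgC : ∀ u > 0, ‖g u‖ ≤ C) :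
    Tendsto (fun y => ∫ u in 0..M, (f (u * y) / f y) • g u) atTop
      (𝓝 (∫ u in 0..M, u ^ (-α) • g u)) := by
  obtain ⟨ρ, hαρ, hρ1⟩ := exists_between hα1
  obtain ⟨K, hK⟩ := hf.exists_eventually_forall_div_le hanti hpos (hα0.trans hαρ.le) hαρ
  refine intervalIntegral.tendsto_integral_filter_of_dominated_convergence
    (fun u => (K * u ^ (-ρ) + 1) * C) ?_ ?_ ?_ ?_
  · refine Eventually.of_forall fun y => AEStronglyMeasurable.smul ?_ (by rwa [uIoc_of_le hM])
    exact ((hanti.measurable.comp (measurable_mul_const y)).div_const _).aestronglyMeasurable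
  · filter_upwards [hK] with y hy
    refine ae_of_all _ fun u hu => ?_
    have hu0 : 0 < u := (uIoc_of_le hM ▸ hu).1
    have hq : 0 ≤ f (u * y) / f y := (div_pos (hpos _) (hpos _)).le
    rw [norm_smul, norm_of_nonneg hq]
    exact mul_le_mul (hy u hu0) (hgC u hu0) (norm_nonneg _) (hq.trans (hy u hu0))
  · have hint : IntervalIntegrable (fun u : ℝ => u ^ (-ρ)) volume 0 M :=
      intervalIntegral.intervalIntegrable_rpow' (neg_lt_neg hρ1)
    exact ((hint.const_mul K).add intervalIntegrable_const).mul_const C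
  · exact ae_of_all _ fun u hu => (hf u (uIoc_of_le hM ▸ hu).1).smul_const (g u)

end RegularlyVarying

section LayerCake

variable {Ω E : Type*} [MeasurableSpace Ω] {μ : Measure Ω} [IsFiniteMeasure μ]
  [NormedAddCommGroup E] [NormedSpace ℝ E] [CompleteSpace E]

lemma integral_comp_min_eq_intervalIntegral {X : Ω → ℝ} (hX : Measurable X)
    (hX0 : ∀ᵐ ω ∂μ, 0 ≤ X ω) {φ : ℝ → E} (hφ0 : φ 0 = 0) {M : ℝ} (hM : 0 ≤ M)
    (hφ : ∀ u ∈ Icc 0 M, DifferentiableAt ℝ φ u)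
    (hint : IntervalIntegrable (deriv φ) volume 0 M) :
    ∫ ω, φ (min (X ω) M) ∂μ = ∫ u in 0..M, μ.real {ω | u < X ω} • deriv φ u := by
  have hftc : ∀ᵐ ω ∂μ, φ (min (X ω) M) = ∫ u in Ioc 0 M, (Iio (X ω)).indicator (deriv φ) u := by
    filter_upwards [hX0] with ω hω
    have hmin : 0 ≤ min (X ω) M := le_min hω hM
    rw [integral_Ioc_eq_integral_Ioo, setIntegral_indicator measurableSet_Iio, Ioo_inter_Iio,
      min_comm M, ← integral_Ioc_eq_integral_Ioo, ← intervalIntegral.integral_of_le hmin,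
      intervalIntegral.integral_eq_sub_of_hasDerivAt (f := φ), hφ0, sub_zero]
    · intro u hu
      rw [uIcc_of_le hmin] at hu
      exact (hφ u ⟨hu.1, hu.2.trans (min_le_right ..)⟩).hasDerivAt
    · refine hint.mono_set ?_
      rw [uIcc_of_le hmin, uIcc_of_le hM]
      exact Icc_subset_Icc_right (min_le_right ..)
  have hprod : Integrable (fun p : Ω × ℝ => (Iio (X p.1)).indicator (deriv φ) p.2)
      (μ.prod (volume.restrict (Ioc 0 M))) :=
    (((intervalIntegrable_iff_integrableOn_Ioc_of_le hM).1 hint).comp_snd μ).indicator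
      (measurableSet_lt measurable_snd (hX.comp measurable_fst))
  rw [integral_congr_ae hftc, integral_integral_swap hprod, intervalIntegral.integral_of_le hM]
  refine integral_congr_ae (ae_of_all _ fun u => ?_)
  exact integral_indicator_const (deriv φ u) (measurableSet_lt measurable_const hX)

end LayerCake

/-- Test functions on the half-line, whose scaled means `∫ φ (x / y) dμ` are compared with the tail
of `μ` at `y`: `φ 0 = 0`, and on `[0, ∞)` the function is differentiable with `‖φ‖ ≤ B` and
`‖φ'‖ ≤ C`. Its values on the negative half-line are irrelevant. -/
structure IsTestFunction {E : Type*} [NormedAddCommGroup E] [NormedSpace ℝ E]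
    (φ : ℝ → E) (B C : ℝ) : Prop where
  map_zero : φ 0 = 0
  differentiableAt : ∀ u ≥ 0, DifferentiableAt ℝ φ u
  norm_le : ∀ u ≥ 0, ‖φ u‖ ≤ B
  norm_deriv_le : ∀ u ≥ 0, ‖deriv φ u‖ ≤ C

lemma integrableOn_rpow_mul_min {α B C : ℝ} (hα : α ∈ Ioo 0 1) (hB : 0 ≤ B) (hC : 0 ≤ C) :
    IntegrableOn (fun u : ℝ => u ^ (-α - 1) * min B (C * u)) (Ioi 0) := by
  have hmeas : Measurable fun u : ℝ => u ^ (-α - 1) * min B (C * u) := by fun_prop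
  have hnorm {u : ℝ} (hu : 0 < u) :
      ‖u ^ (-α - 1) * min B (C * u)‖ = u ^ (-α - 1) * min B (C * u) :=
    norm_of_nonneg (by positivity)
  rw [← Ioc_union_Ioi_eq_Ioi zero_le_one]
  refine IntegrableOn.union ?_ ?_
  · have hint : IntegrableOn (fun u : ℝ => C * u ^ (-α)) (Ioc 0 1) :=
      (intervalIntegrable_iff_integrableOn_Ioc_of_le zero_le_one).1
        ((intervalIntegral.intervalIntegrable_rpow' (neg_lt_neg hα.2)).const_mul C)
    refine hint.mono' hmeas.aestronglyMeasurable ?_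
    filter_upwards [ae_restrict_mem measurableSet_Ioc] with u hu
    calc ‖u ^ (-α - 1) * min B (C * u)‖ = u ^ (-α - 1) * min B (C * u) := hnorm hu.1
      _ ≤ u ^ (-α - 1) * (C * u) := by
        have := hu.1.le
        gcongr
        exact min_le_right ..
      _ = C * u ^ (-α) := by
        rw [rpow_sub_one hu.1.ne']
        field_simp [hu.1.ne']
  · have hint : IntegrableOn (fun u : ℝ => u ^ (-α - 1) * B) (Ioi 1) :=
      (integrableOn_Ioi_rpow_of_lt (by linarith [hα.1]) one_pos).mul_const B
    refine hint.mono' hmeas.aestronglyMeasurable ?_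
    filter_upwards [ae_restrict_mem measurableSet_Ioi] with u hu
    have hu0 : 0 < u := one_pos.trans hu
    rw [hnorm hu0]
    gcongr
    exact min_le_left ..

namespace IsTestFunction

variable {E : Type*} [NormedAddCommGroup E] [NormedSpace ℝ E] {φ : ℝ → E} {B C α : ℝ}

lemma bound_nonneg (hφ : IsTestFunction φ B C) : 0 ≤ B :=
  (norm_nonneg _).trans (hφ.norm_le 0 le_rfl)

lemma deriv_bound_nonneg (hφ : IsTestFunction φ B C) : 0 ≤ C :=
  (norm_nonneg _).trans (hφ.norm_deriv_le 0 le_rfl)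

lemma norm_le_min (hφ : IsTestFunction φ B C) {u : ℝ} (hu : 0 ≤ u) : ‖φ u‖ ≤ min B (C * u) := by
  refine le_min (hφ.norm_le u hu) ?_
  simpa [hφ.map_zero, abs_of_nonneg hu] using
    (convex_Ici (0 : ℝ)).norm_image_sub_le_of_norm_deriv_le hφ.differentiableAt
      hφ.norm_deriv_le self_mem_Ici hu

lemma continuousOn (hφ : IsTestFunction φ B C) : ContinuousOn φ (Ici 0) :=
  fun u hu => (hφ.differentiableAt u hu).continuousAt.continuousWithinAt

lemma norm_rpow_smul_le (hφ : IsTestFunction φ B C) {u : ℝ} (hu : 0 < u) :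
    ‖u ^ (-α - 1) • φ u‖ ≤ u ^ (-α - 1) * min B (C * u) := by
  rw [norm_smul, norm_of_nonneg (rpow_nonneg hu.le _)]
  exact mul_le_mul_of_nonneg_left (hφ.norm_le_min hu.le) (rpow_nonneg hu.le _)

lemma integrableOn_rpow_smul (hφ : IsTestFunction φ B C) (hα : α ∈ Ioo 0 1) :
    IntegrableOn (fun u => u ^ (-α - 1) • φ u) (Ioi 0) := by
  refine (integrableOn_rpow_mul_min hα hφ.bound_nonneg hφ.deriv_bound_nonneg).mono' ?_ ?_
  · exact (measurable_id.pow_const _).aestronglyMeasurable.smul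
      ((hφ.continuousOn.mono Ioi_subset_Ici_self).aestronglyMeasurable measurableSet_Ioi)
  · filter_upwards [ae_restrict_mem measurableSet_Ioi] with u hu using hφ.norm_rpow_smul_le hu

lemma tendsto_rpow_smul_nhdsGT_zero (hφ : IsTestFunction φ B C) (hα : α < 1) :
    Tendsto (fun u : ℝ => u ^ (-α) • φ u) (𝓝[>] 0) (𝓝 0) := by
  have hlim : Tendsto (fun u : ℝ => C * u ^ (1 - α)) (𝓝[>] 0) (𝓝 0) := by
    have h := ((continuousAt_rpow_const 0 (1 - α) (Or.inr (sub_pos.2 hα).le)).tendsto.const_mul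
      C).mono_left (nhdsWithin_le_nhds (s := Ioi 0))
    rwa [zero_rpow (sub_pos.2 hα).ne', mul_zero] at h
  refine squeeze_zero_norm' ?_ hlim
  filter_upwards [self_mem_nhdsWithin] with u (hu : 0 < u)
  calc ‖u ^ (-α) • φ u‖ = u ^ (-α) * ‖φ u‖ := by
        rw [norm_smul, norm_of_nonneg (rpow_nonneg hu.le _)]
    _ ≤ u ^ (-α) * (C * u) := by
        gcongr
        exact (hφ.norm_le_min hu.le).trans (min_le_right ..)
    _ = C * u ^ (1 - α) := by
        rw [sub_eq_neg_add, rpow_add_one hu.ne']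
        ring

variable [CompleteSpace E]

lemma intervalIntegrable_smul_deriv (hφ : IsTestFunction φ B C) {g : ℝ → ℝ} {M : ℝ} (hM : 0 ≤ M)
    (hg : IntervalIntegrable g volume 0 M) :
    IntervalIntegrable (fun u => g u • deriv φ u) volume 0 M := by
  rw [intervalIntegrable_iff_integrableOn_Ioc_of_le hM] at hg ⊢
  refine hg.smul_bdd C (aestronglyMeasurable_deriv φ _) ?_
  filter_upwards [ae_restrict_mem measurableSet_Ioc] with u hu using hφ.norm_deriv_le u hu.1.le

lemma intervalIntegral_rpow_smul_deriv (hφ : IsTestFunction φ B C) (hα : α ∈ Ioo 0 1) {M : ℝ}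
    (hM : 0 < M) :
    ∫ u in 0..M, u ^ (-α) • deriv φ u =
      M ^ (-α) • φ M + α • ∫ u in 0..M, u ^ (-α - 1) • φ u := by
  have hint_deriv : IntervalIntegrable (fun u => u ^ (-α) • deriv φ u) volume 0 M :=
    hφ.intervalIntegrable_smul_deriv hM.le
      (intervalIntegral.intervalIntegrable_rpow' (neg_lt_neg hα.2))
  have hint : IntervalIntegrable (fun u => α • (u ^ (-α - 1) • φ u)) volume 0 M :=
    ((intervalIntegrable_iff_integrableOn_Ioc_of_le hM.le).2
      ((hφ.integrableOn_rpow_smul hα).mono_set Ioc_subset_Ioi_self)).smul α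
  have hderiv : ∀ u ∈ Ioo 0 M, HasDerivAt (fun u => u ^ (-α) • φ u)
      (u ^ (-α) • deriv φ u - α • (u ^ (-α - 1) • φ u)) u := by
    intro u hu
    convert (hasDerivAt_rpow_const (p := -α) (Or.inl hu.1.ne')).fun_smul
      (hφ.differentiableAt u hu.1.le).hasDerivAt using 1
    rw [neg_mul, neg_smul, mul_smul, sub_eq_add_neg]
  have hend : Tendsto (fun u : ℝ => u ^ (-α) • φ u) (𝓝[<] M) (𝓝 (M ^ (-α) • φ M)) :=
    ((continuousAt_rpow_const M _ (Or.inl hM.ne')).smul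
      (hφ.differentiableAt M hM.le).continuousAt).tendsto.mono_left nhdsWithin_le_nhds
  have hparts := intervalIntegral.integral_eq_sub_of_hasDerivAt_of_tendsto hM hderiv
    (hint_deriv.sub hint) (hφ.tendsto_rpow_smul_nhdsGT_zero hα.2) hend
  rwa [intervalIntegral.integral_sub hint_deriv hint, intervalIntegral.integral_smul, sub_zero,
    sub_eq_iff_eq_add] at hparts

lemma tendsto_intervalIntegral_rpow_smul_deriv (hφ : IsTestFunction φ B C) (hα : α ∈ Ioo 0 1) :
    Tendsto (fun M : ℝ => ∫ u in 0..M, u ^ (-α) • deriv φ u) atTop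
      (𝓝 (α • ∫ u in Ioi 0, u ^ (-α - 1) • φ u)) := by
  have hboundary : Tendsto (fun M : ℝ => M ^ (-α) • φ M) atTop (𝓝 0) := by
    refine (tendsto_rpow_neg_atTop hα.1).zero_smul_isBoundedUnder_le ?_
    refine isBoundedUnder_of_eventually_le (a := B) ?_
    filter_upwards [eventually_ge_atTop 0] with M hM using hφ.norm_le M hM
  have hlim := hboundary.add ((intervalIntegral_tendsto_integral_Ioi 0
    (hφ.integrableOn_rpow_smul hα) tendsto_id).const_smul α)
  rw [zero_add] at hlim
  refine hlim.congr' ?_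
  filter_upwards [eventually_gt_atTop 0] with M hM
  exact (hφ.intervalIntegral_rpow_smul_deriv hα hM).symm

end IsTestFunction

/-- The tail `x ↦ μ (x, ∞)` of a measure on the line. -/
noncomputable def tail (μ : Measure ℝ) (x : ℝ) : ℝ := μ.real (Ioi x)

section Abelian

variable {μ : Measure ℝ} [IsFiniteMeasure μ] {E : Type*} [NormedAddCommGroup E] [NormedSpace ℝ E]
  {φ : ℝ → E} {B C α : ℝ}

lemma antitone_tail : Antitone (tail μ) := fun _ _ hxy => measureReal_mono (Ioi_subset_Ioi hxy)

lemma RegularlyVarying.tail_pos {ρ : ℝ} (hRV : RegularlyVarying (tail μ) ρ) (x : ℝ) :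
    0 < tail μ x :=
  hRV.pos_of_antitone antitone_tail (fun _ => measureReal_nonneg) x

lemma IsTestFunction.integrable_comp (hφ : IsTestFunction φ B C) (hμ : ∀ᵐ x ∂μ, 0 ≤ x)
    {X : ℝ → ℝ} (hX : Continuous X) (hX0 : ∀ x ≥ 0, 0 ≤ X x) :
    Integrable (fun x => φ (X x)) μ := by
  refine Integrable.of_bound ?_ B ?_
  · rw [← Measure.restrict_eq_self_of_ae_mem (s := Ici 0) hμ]
    exact (hφ.continuousOn.comp hX.continuousOn hX0).aestronglyMeasurable measurableSet_Ici
  · filter_upwards [hμ] with x hx using hφ.norm_le _ (hX0 x hx)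

lemma IsTestFunction.norm_integral_sub_integral_min_le (hφ : IsTestFunction φ B C)
    (hμ : ∀ᵐ x ∂μ, 0 ≤ x) {M y : ℝ} (hM : 0 ≤ M) (hy : 0 < y) :
    ‖∫ x, φ (x / y) ∂μ - ∫ x, φ (min (x / y) M) ∂μ‖ ≤ 2 * B * tail μ (M * y) := by
  have hdiv0 : ∀ x ≥ 0, 0 ≤ x / y := fun x hx => div_nonneg hx hy.le
  have hpointwise : ∀ᵐ x ∂μ, ‖φ (x / y) - φ (min (x / y) M)‖
      ≤ (Ioi (M * y)).indicator (fun _ => 2 * B) x := by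
    filter_upwards [hμ] with x hx
    rcases le_or_gt x (M * y) with hxM | hxM
    · rw [min_eq_left ((div_le_iff₀ hy).2 hxM), sub_self, norm_zero]
      exact indicator_nonneg (fun _ _ => mul_nonneg two_pos.le hφ.bound_nonneg) x
    · rw [indicator_of_mem (mem_Ioi.2 hxM), two_mul]
      exact (norm_sub_le _ _).trans
        (add_le_add (hφ.norm_le _ (hdiv0 x hx)) (hφ.norm_le _ (le_min (hdiv0 x hx) hM)))
  rw [← integral_sub (hφ.integrable_comp hμ (by fun_prop) hdiv0)
    (hφ.integrable_comp hμ (by fun_prop) fun x hx => le_min (hdiv0 x hx) hM)]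
  calc ‖∫ x, φ (x / y) - φ (min (x / y) M) ∂μ‖
      ≤ ∫ x, (Ioi (M * y)).indicator (fun _ => 2 * B) x ∂μ :=
        norm_integral_le_of_norm_le ((integrable_const _).indicator measurableSet_Ioi) hpointwise
    _ = 2 * B * tail μ (M * y) := by
        rw [integral_indicator_const _ measurableSet_Ioi, smul_eq_mul, mul_comm, tail]

lemma IsTestFunction.tendstoUniformlyOnFilter_min (hφ : IsTestFunction φ B C)
    (hμ : ∀ᵐ x ∂μ, 0 ≤ x) (hRV : RegularlyVarying (tail μ) (-α)) (hα : 0 < α) :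
    TendstoUniformlyOnFilter (fun M y => (tail μ y)⁻¹ • ∫ x, φ (min (x / y) M) ∂μ)
      (fun y => (tail μ y)⁻¹ • ∫ x, φ (x / y) ∂μ) atTop atTop := by
  rw [Metric.tendstoUniformlyOnFilter_iff]
  intro ε hε
  have hsmall : Tendsto (fun M : ℝ => 2 * B * M ^ (-α)) atTop (𝓝 0) := by
    simpa using (tendsto_rpow_neg_atTop hα).const_mul (2 * B)
  obtain ⟨M₀, hM₀, hM₀pos⟩ := ((hsmall.eventually_lt_const hε).and (eventually_gt_atTop 0)).exists
  have htail : ∀ᶠ y in atTop, 2 * B * (tail μ (M₀ * y) / tail μ y) < ε :=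
    ((hRV M₀ hM₀pos).const_mul (2 * B)).eventually_lt_const hM₀
  filter_upwards [(eventually_ge_atTop M₀).prod_mk (htail.and (eventually_gt_atTop 0))]
    with ⟨M, y⟩ ⟨hM, hy, hy0⟩
  dsimp only at hM hy hy0 ⊢
  rw [dist_eq_norm, ← smul_sub, norm_smul, norm_of_nonneg (inv_pos.2 (hRV.tail_pos y)).le]
  refine lt_of_le_of_lt ?_ hy
  rw [inv_mul_le_iff₀ (hRV.tail_pos y)]
  calc ‖∫ x, φ (x / y) ∂μ - ∫ x, φ (min (x / y) M) ∂μ‖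
      ≤ 2 * B * tail μ (M * y) :=
        hφ.norm_integral_sub_integral_min_le hμ (hM₀pos.le.trans hM) hy0
    _ ≤ 2 * B * tail μ (M₀ * y) := by
        have := hφ.bound_nonneg
        gcongr
        exact antitone_tail (by gcongr)
    _ = tail μ y * (2 * B * (tail μ (M₀ * y) / tail μ y)) := by
        field_simp [(hRV.tail_pos y).ne']

variable [CompleteSpace E]

lemma IsTestFunction.tendsto_integral_min (hφ : IsTestFunction φ B C)
    (hμ : ∀ᵐ x ∂μ, 0 ≤ x) (hRV : RegularlyVarying (tail μ) (-α)) (hα : α ∈ Ioo 0 1) {M : ℝ}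
    (hM : 0 ≤ M) :
    Tendsto (fun y => (tail μ y)⁻¹ • ∫ x, φ (min (x / y) M) ∂μ) atTop
      (𝓝 (∫ u in 0..M, u ^ (-α) • deriv φ u)) := by
  refine (hRV.tendsto_intervalIntegral antitone_tail hRV.tail_pos hα.1.le hα.2 hM
    (aestronglyMeasurable_deriv φ _) fun u hu => hφ.norm_deriv_le u hu.le).congr' ?_
  filter_upwards [eventually_gt_atTop 0] with y hy
  have hint : IntervalIntegrable (deriv φ) volume 0 M := by
    simpa only [one_smul] using
      hφ.intervalIntegrable_smul_deriv hM (g := fun _ => 1) intervalIntegrable_const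
  rw [integral_comp_min_eq_intervalIntegral (X := fun x => x / y) (by fun_prop)
    (hμ.mono fun x hx => div_nonneg hx hy.le) hφ.map_zero hM
    (fun u hu => hφ.differentiableAt u hu.1) hint, ← intervalIntegral.integral_smul]
  refine intervalIntegral.integral_congr fun u _ => ?_
  have hset : {x | u < x / y} = Ioi (u * y) := ext fun x => lt_div_iff₀ hy
  simp only [hset, tail, smul_smul, ← div_eq_inv_mul]

theorem IsTestFunction.tendsto_integral_comp_div (hφ : IsTestFunction φ B C)
    (hμ : ∀ᵐ x ∂μ, 0 ≤ x) (hRV : RegularlyVarying (tail μ) (-α)) (hα : α ∈ Ioo 0 1) :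
    Tendsto (fun y => (tail μ y)⁻¹ • ∫ x, φ (x / y) ∂μ) atTop
      (𝓝 (α • ∫ u in Ioi 0, u ^ (-α - 1) • φ u)) :=
  (hφ.tendstoUniformlyOnFilter_min hμ hRV hα.1).tendsto_of_eventually_tendsto
    ((eventually_ge_atTop 0).mono fun _ hM => hφ.tendsto_integral_min hμ hRV hα hM)
    (hφ.tendsto_intervalIntegral_rpow_smul_deriv hα)

end Abelian

section LaplaceGamma

open Complex ProbabilityTheory

lemma integrableOn_rpow_smul_cexp_neg_mul {s : ℝ} (hs : 0 < s) {z : ℂ} (hz : 0 < z.re) :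
    IntegrableOn (fun u : ℝ => u ^ (s - 1) • cexp (-(z * u))) (Ioi 0) := by
  have hreal : IntegrableOn (fun u : ℝ => u ^ (s - 1) * rexp (-z.re * u)) (Ioi 0) := by
    simpa only [rpow_one] using
      integrableOn_rpow_mul_exp_neg_mul_rpow (p := 1) (by linarith : -1 < s - 1) one_pos hz
  have hmeas : Measurable fun u : ℝ => u ^ (s - 1) • cexp (-(z * u)) := by fun_prop
  refine hreal.mono' hmeas.aestronglyMeasurable ?_
  filter_upwards [ae_restrict_mem measurableSet_Ioi] with u hu
  rw [norm_smul, norm_of_nonneg (rpow_nonneg (le_of_lt hu) _), norm_exp, neg_re, re_mul_ofReal,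
    neg_mul]

/-- The measure `u ^ (s - 1) du` on `(0, ∞)`, whose Laplace transform is `Γ(s) z ^ (-s)`. -/
noncomputable def rpowMeasure (s : ℝ) : Measure ℝ :=
  (volume.restrict (Ioi 0)).withDensity fun u => ENNReal.ofReal (u ^ (s - 1))

lemma complexMGF_neg_rpowMeasure (s : ℝ) (z : ℂ) :
    complexMGF (fun u => -u) (rpowMeasure s) z =
      ∫ u in Ioi (0 : ℝ), u ^ (s - 1) • cexp (-(z * u)) := by
  rw [complexMGF, rpowMeasure, integral_withDensity_eq_integral_toReal_smul (by fun_prop)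
    (ae_of_all _ fun _ => ENNReal.ofReal_lt_top)]
  refine setIntegral_congr_fun measurableSet_Ioi fun u hu => ?_
  simp only [ENNReal.toReal_ofReal (rpow_nonneg (le_of_lt hu) _), ofReal_neg, mul_neg]

lemma Ioi_subset_integrableExpSet_neg_rpowMeasure {s : ℝ} (hs : 0 < s) :
    Ioi 0 ⊆ integrableExpSet (fun u => -u) (rpowMeasure s) := by
  intro t ht
  rw [integrableExpSet, mem_ofPred, rpowMeasure, integrable_withDensity_iff_integrable_smul'
    (by fun_prop) (ae_of_all _ fun _ => ENNReal.ofReal_lt_top)]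
  refine (integrableOn_rpow_smul_cexp_neg_mul hs (z := t) ht).norm.congr ?_
  filter_upwards [ae_restrict_mem measurableSet_Ioi] with u hu
  have hpow : 0 ≤ u ^ (s - 1) := rpow_nonneg (le_of_lt hu) _
  rw [norm_smul, norm_of_nonneg hpow, norm_exp, ENNReal.toReal_ofReal hpow, smul_eq_mul]
  simp

lemma integral_rpow_smul_cexp_neg_mul_ofReal {s t : ℝ} (hs : 0 < s) (ht : 0 < t) :
    ∫ u in Ioi (0 : ℝ), u ^ (s - 1) • cexp (-(t * u)) = (t : ℂ) ^ (-s : ℂ) * Real.Gamma s := by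
  rw [cpow_neg, ← inv_cpow _ _ (by simp [arg_ofReal_of_nonneg ht.le, pi_ne_zero.symm]),
    ← Gamma_ofReal, ← one_div, ← integral_cpow_mul_exp_neg_mul_Ioi (by simpa using hs) ht]
  refine setIntegral_congr_fun measurableSet_Ioi fun u hu => ?_
  simp only [real_smul, ofReal_cpow (le_of_lt hu), ofReal_sub, ofReal_one]

/-- Both sides are holomorphic on the right half-plane and agree on its real points. -/
theorem integral_rpow_smul_cexp_neg_mul {s : ℝ} (hs : 0 < s) {z : ℂ} (hz : 0 < z.re) :
    ∫ u in Ioi (0 : ℝ), u ^ (s - 1) • cexp (-(z * u)) = z ^ (-s : ℂ) * Real.Gamma s := by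
  have hlaplace : AnalyticOnNhd ℂ (complexMGF (fun u => -u) (rpowMeasure s)) {z | 0 < z.re} :=
    analyticOnNhd_complexMGF.mono fun w hw =>
      interior_maximal (Ioi_subset_integrableExpSet_neg_rpowMeasure hs) isOpen_Ioi hw
  have hpower : AnalyticOnNhd ℂ (fun w : ℂ => w ^ (-s : ℂ) * Real.Gamma s) {z | 0 < z.re} :=
    fun w hw => (analyticAt_id.cpow analyticAt_const (Or.inl hw)).mul analyticAt_const
  have hofReal : Tendsto ((↑) : ℝ → ℂ) (𝓝[>] 1) (𝓝[≠] 1) := by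
    refine tendsto_nhdsWithin_iff.2 ⟨(continuous_ofReal.tendsto' 1 1 ofReal_one).mono_left
      nhdsWithin_le_nhds, ?_⟩
    filter_upwards [self_mem_nhdsWithin] with x hx
    exact ofReal_ne_one.2 (ne_of_gt hx)
  have hreal : ∃ᶠ w : ℂ in 𝓝[≠] 1,
      complexMGF (fun u => -u) (rpowMeasure s) w = w ^ (-s : ℂ) * Real.Gamma s := by
    refine hofReal.frequently (Eventually.frequently ?_)
    filter_upwards [self_mem_nhdsWithin] with t ht
    rw [complexMGF_neg_rpowMeasure,
      integral_rpow_smul_cexp_neg_mul_ofReal hs (one_pos.trans ht)]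
  rw [← complexMGF_neg_rpowMeasure]
  exact hlaplace.eqOn_of_preconnected_of_frequently_eq hpower
    (convex_halfSpace_re_gt 0).isPreconnected (by simp) hreal hz

end LaplaceGamma

section OneSubExp

open Complex

variable {α C : ℝ} {z : ℂ}

lemma hasDerivAt_one_sub_cexp_neg_mul (z : ℂ) (u : ℝ) :
    HasDerivAt (fun u : ℝ => 1 - cexp (-(z * u))) (z * cexp (-(z * u))) u := by
  have hlin : HasDerivAt (fun u : ℝ => -(z * u)) (-z) u := by
    simpa using ((hasDerivAt_id u).ofReal_comp.const_mul z).fun_neg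
  exact (hlin.cexp.const_sub 1).congr_deriv (by ring)

lemma norm_cexp_neg_mul_le_one (hz : 0 ≤ z.re) {u : ℝ} (hu : 0 ≤ u) : ‖cexp (-(z * u))‖ ≤ 1 := by
  rw [norm_exp, neg_re, re_mul_ofReal]
  exact Real.exp_le_one_iff.2 (neg_nonpos.2 (mul_nonneg hz hu))

lemma isTestFunction_one_sub_cexp (hz : 0 ≤ z.re) (hC : ‖z‖ ≤ C) :
    IsTestFunction (fun u : ℝ => 1 - cexp (-(z * u))) 2 C where
  map_zero := by simp
  differentiableAt u _ := (hasDerivAt_one_sub_cexp_neg_mul z u).differentiableAt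
  norm_le u hu := by
    refine (norm_sub_le _ _).trans ?_
    rw [norm_one, ← one_add_one_eq_two]
    gcongr
    exact norm_cexp_neg_mul_le_one hz hu
  norm_deriv_le u hu := by
    rw [(hasDerivAt_one_sub_cexp_neg_mul z u).deriv, norm_mul]
    exact (mul_le_of_le_one_right (norm_nonneg z) (norm_cexp_neg_mul_le_one hz hu)).trans hC

lemma integral_rpow_smul_one_sub_cexp_of_re_pos (hα : α ∈ Ioo 0 1) (hz : 0 < z.re) :
    α • ∫ u in Ioi (0 : ℝ), u ^ (-α - 1) • (1 - cexp (-(z * u))) =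
      z ^ (α : ℂ) * Real.Gamma (1 - α) := by
  have hs : 0 < 1 - α := sub_pos.2 hα.2
  have hz0 : z ≠ 0 := by
    rintro rfl
    simp at hz
  have hexponent : 1 - α - 1 = -α := by ring
  have hderiv (u : ℝ) : u ^ (-α) • deriv (fun u : ℝ => 1 - cexp (-(z * u))) u =
      z * (u ^ (1 - α - 1) • cexp (-(z * u))) := by
    rw [(hasDerivAt_one_sub_cexp_neg_mul z u).deriv, hexponent, mul_smul_comm]
  have hparts := (isTestFunction_one_sub_cexp hz.le le_rfl).tendsto_intervalIntegral_rpow_smul_deriv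
    hα
  have hgamma := intervalIntegral_tendsto_integral_Ioi 0
    ((integrableOn_rpow_smul_cexp_neg_mul hs hz).const_mul z) tendsto_id
  simp only [hderiv] at hparts
  rw [tendsto_nhds_unique hparts hgamma, integral_const_mul,
    integral_rpow_smul_cexp_neg_mul hs hz, ← mul_assoc]
  congr 1
  rw [ofReal_sub, ofReal_one, neg_sub, cpow_sub _ _ hz0, cpow_one, mul_div_cancel₀ _ hz0]

/-- The boundary case `re z = 0` follows from the open half-plane by letting `z + ε → z`. -/
theorem integral_rpow_smul_one_sub_cexp (hα : α ∈ Ioo 0 1) (hz : 0 ≤ z.re) :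
    α • ∫ u in Ioi (0 : ℝ), u ^ (-α - 1) • (1 - cexp (-(z * u))) =
      z ^ (α : ℂ) * Real.Gamma (1 - α) := by
  have hshift : Tendsto (fun ε : ℝ => z + ε) (𝓝[>] 0) (𝓝 z) := by
    have h : Continuous fun ε : ℝ => z + ε := by fun_prop
    exact (h.tendsto' 0 z (by simp)).mono_left nhdsWithin_le_nhds
  have hleft : Tendsto (fun ε : ℝ => ∫ u in Ioi (0 : ℝ), u ^ (-α - 1) • (1 - cexp (-((z + ε) * u))))
      (𝓝[>] 0) (𝓝 (∫ u in Ioi (0 : ℝ), u ^ (-α - 1) • (1 - cexp (-(z * u))))) := by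
    refine tendsto_integral_filter_of_dominated_convergence _ ?_ ?_
      (integrableOn_rpow_mul_min hα two_pos.le (by positivity : 0 ≤ ‖z‖ + 1)) ?_
    · refine Eventually.of_forall fun ε => Measurable.aestronglyMeasurable ?_
      fun_prop
    · filter_upwards [Ioo_mem_nhdsGT one_pos] with ε hε
      have hre : 0 ≤ (z + ε).re := by simpa using add_nonneg hz hε.1.le
      have hnorm : ‖z + ε‖ ≤ ‖z‖ + 1 :=
        (norm_add_le _ _).trans (by simpa [abs_of_pos hε.1] using hε.2.le)
      filter_upwards [ae_restrict_mem measurableSet_Ioi] with u hu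
      exact (isTestFunction_one_sub_cexp hre hnorm).norm_rpow_smul_le hu
    · refine ae_of_all _ fun u => ?_
      have h : Continuous fun w : ℂ => u ^ (-α - 1) • (1 - cexp (-(w * u))) := by fun_prop
      exact (h.tendsto z).comp hshift
  have hright := ((continuousAt_cpow_const_of_re_pos (Or.inl hz)
    (by simpa using hα.1 : 0 < (α : ℂ).re)).tendsto.comp hshift).mul_const (Real.Gamma (1 - α) : ℂ)
  refine tendsto_nhds_unique (hleft.const_smul α) (hright.congr' ?_)
  filter_upwards [self_mem_nhdsWithin] with ε (hε : 0 < ε)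
  have hre : 0 < (z + ε).re := by simpa using add_pos_of_nonneg_of_pos hz hε
  exact (integral_rpow_smul_one_sub_cexp_of_re_pos hα hre).symm

lemma neg_I_cpow (κ : ℝ) : (-I) ^ (κ : ℂ) = cexp (-(π * κ / 2 : ℝ) * I) := by
  rw [cpow_def_of_ne_zero (neg_ne_zero.2 I_ne_zero), log_neg_I]
  push_cast
  ring_nf

end OneSubExp

section CharacteristicFunction

open Complex

variable {μ : Measure ℝ}

lemma one_sub_measureReal_Icc_eq_tail [IsProbabilityMeasure μ] (hμ : ∀ᵐ x ∂μ, 0 ≤ x) (t : ℝ) :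
    1 - μ.real (Icc 0 t) = tail μ t := by
  have hIcc : Icc 0 t =ᵐ[μ] Iic t := by
    filter_upwards [hμ] with x hx
    exact propext (and_iff_right hx)
  rw [measureReal_congr hIcc, ← probReal_compl_eq_one_sub measurableSet_Iic, compl_Iic, tail]

lemma one_sub_integral_cexp_mul_I [IsProbabilityMeasure μ] (t : ℝ) :
    1 - ∫ x, cexp (((t * x : ℝ) : ℂ) * I) ∂μ = ∫ x, (1 - cexp (-(-I * (t * x : ℝ)))) ∂μ := by
  have hint : Integrable (fun x => cexp (-(-I * (t * x : ℝ)))) μ := by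
    refine Integrable.of_bound (by fun_prop) 1 (ae_of_all _ fun x => ?_)
    simp [norm_exp]
  rw [integral_sub (integrable_const _) hint, integral_const, probReal_univ, one_smul]
  simp only [neg_mul, neg_neg, mul_comm I]

theorem stmt_4_general [IsFiniteMeasure μ] (hμ : ∀ᵐ x ∂μ, 0 ≤ x) {κ : ℝ} (hκ : κ ∈ Ioo 0 1)
    {L : ℝ → ℝ} (hL : RegularlyVarying L 0)
    (htail : Tendsto (fun t => tail μ t / (L t / t ^ κ)) atTop (𝓝 1)) {z : ℂ} (hz : 0 ≤ z.re) :
    Tendsto (fun t : ℝ =>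
        (∫ x, (1 - cexp (-(z * (t * x : ℝ)))) ∂μ) / ((t ^ κ * L (1 / t) : ℝ) : ℂ))
      (𝓝[>] 0) (𝓝 (z ^ (κ : ℂ) * Real.Gamma (1 - κ))) := by
  have hRV : RegularlyVarying (tail μ) (-κ) := by
    simpa only [zero_sub] using (hL.div (RegularlyVarying.rpow κ)).of_tendsto_div htail
  have habel := (isTestFunction_one_sub_cexp hz le_rfl).tendsto_integral_comp_div hμ hRV hκ
  rw [integral_rpow_smul_one_sub_cexp hκ hz] at habel
  have hlim := (habel.mul htail.ofReal).comp tendsto_inv_nhdsGT_zero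
  rw [ofReal_one, mul_one] at hlim
  refine hlim.congr' ?_
  filter_upwards [self_mem_nhdsWithin] with t (ht : 0 < t)
  have hne : tail μ t⁻¹ ≠ 0 := (hRV.tail_pos _).ne'
  simp only [Function.comp_apply, real_smul, inv_rpow ht.le, div_inv_eq_mul, one_div, mul_comm t]
  rw [ofReal_div, ofReal_inv, mul_comm (t ^ κ)]
  field_simp [ofReal_ne_zero.2 hne]

end CharacteristicFunction
end

/-- Local expansion of the characteristic function of a heavy-tailed
distribution: `μ̂(t) = 1 - e^{-iπκ/2} Γ(1-κ) t^κ L(1/t)(1+o(1))` as `t → 0⁺`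
(estimate (6.3) of the paper). -/
theorem stmt_4 (μ : Measure ℝ) [IsProbabilityMeasure μ] (hμ : μ (Set.Ici 0) = 1)
    (F : ℝ → ℝ) (hF : ∀ t, F t = (μ (Set.Icc 0 t)).toReal)
    (κ : ℝ) (hκ : κ ∈ Set.Ioo (0:ℝ) 1)
    (L : ℝ → ℝ) (hLpos : ∀ t > 0, 0 < L t) (hLmeas : Measurable L)
    (hLslow : ∀ lam > 0, Tendsto (fun t => L (lam * t) / L t) atTop (nhds 1))
    (htail : Tendsto (fun t => (1 - F t) / (L t / t ^ κ)) atTop (nhds 1)) :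
    Tendsto (fun t : ℝ =>
        (1 - ∫ x, Complex.exp (((t * x : ℝ) : ℂ) * Complex.I) ∂μ)
          / ((t ^ κ * L (1 / t) : ℝ) : ℂ))
      (nhdsWithin 0 (Set.Ioi 0))
      (nhds (Complex.exp (-(Real.pi * κ / 2 : ℝ) * Complex.I) * (Real.Gamma (1 - κ) : ℂ))) := by
  have hμ0 : ∀ᵐ x ∂μ, 0 ≤ x := (prob_compl_eq_zero_iff measurableSet_Ici).2 hμ
  have hL : RegularlyVarying L 0 := fun c hc => by simpa only [Real.rpow_zero] using hLslow c hc
  simp only [hF, ← Measure.real_def, one_sub_measureReal_Icc_eq_tail hμ0] at htail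
  simp only [one_sub_integral_cexp_mul_I, ← neg_I_cpow]
  exact stmt_4_general hμ0 hκ hL htail (by simp)
end

section
/- Let ω > 2, κ ∈ (1/2, 1), and δ = ω/2. Let (d_n)_{n≥3} be a sequence of reals for which there exists a constant M ≥ 0 such that |d_n − (2 log n + 2(1+κ) log log n)/ω| ≤ M/ω for all n ≥ 3. Then there exist constants 0 < c₁ ≤ c₂ and t₀ > 0 such that for all t ≥ t₀: c₁ t^{−κ} ≤ Σ_{n≥3 : d_n > t} e^{−δ d_n} ≤ c₂ t^{−κ}. -/
open Filter
open scoped ENNReal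

/-!
Put `g x = 1 / (x (log x)^(1+κ))`, which is minus the derivative of `(log x)^(-κ) / κ` and is
decreasing. Hence `∑_{log n > s} g n` telescopes, up to shifting the index by one, to
`s^(-κ) / κ`. The hypothesis on `d` says that `e^(-δ d_n)` is `g n` up to a bounded factor and that
`δ d_n` lies between `log n` and `(2 + κ) log n` up to a bounded term, so replacing the condition
`d_n > t` by `log n > s` costs only an affine change of the threshold.
-/

section PowerTail

/-- `S t` decays like `t ^ (-κ)` up to multiplicative constants as `t → ∞`. -/
def HasPowerTail (κ : ℝ) (S : ℝ → ℝ≥0∞) : Prop :=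
  ∃ c₁ c₂ : ℝ, 0 < c₁ ∧ ∀ᶠ t in atTop,
    ENNReal.ofReal (c₁ * t ^ (-κ)) ≤ S t ∧ S t ≤ ENNReal.ofReal (c₂ * t ^ (-κ))

variable {κ : ℝ} {S S₁ S₂ T : ℝ → ℝ≥0∞}

lemma hasPowerTail_rpow (κ : ℝ) : HasPowerTail κ fun t ↦ ENNReal.ofReal (t ^ (-κ)) :=
  ⟨1, 1, one_pos, by simp⟩

lemma HasPowerTail.of_le_of_le (h₁ : HasPowerTail κ S₁) (h₂ : HasPowerTail κ S₂) {a b : ℝ}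
    (ha : 0 < a) (hb : 0 ≤ b) (h₁T : ∀ᶠ t in atTop, ENNReal.ofReal a * S₁ t ≤ T t)
    (hT₂ : ∀ᶠ t in atTop, T t ≤ ENNReal.ofReal b * S₂ t) : HasPowerTail κ T := by
  obtain ⟨c₁, _, hc₁, hS₁⟩ := h₁
  obtain ⟨_, c₂, _, hS₂⟩ := h₂
  refine ⟨a * c₁, b * c₂, mul_pos ha hc₁, ?_⟩
  filter_upwards [hS₁, hS₂, h₁T, hT₂] with t ⟨hS₁t, _⟩ ⟨_, hS₂t⟩ h₁Tt hT₂t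
  rw [mul_assoc, mul_assoc, ENNReal.ofReal_mul ha.le, ENNReal.ofReal_mul hb]
  exact ⟨le_trans (by gcongr) h₁Tt, hT₂t.trans (by gcongr)⟩

lemma tendsto_rpow_affine_div_rpow {p : ℝ} (hp : 0 < p) (q r : ℝ) :
    Tendsto (fun t : ℝ ↦ (p * t + q) ^ r / t ^ r) atTop (nhds (p ^ r)) := by
  have hratio : Tendsto (fun t : ℝ ↦ p + q / t) atTop (nhds p) := by
    simpa only [add_zero, id] using
      (tendsto_const_nhds (x := p)).add (tendsto_const_nhds.div_atTop tendsto_id)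
  refine (hratio.rpow_const (Or.inl hp.ne')).congr' ?_
  have hpos : ∀ᶠ t : ℝ in atTop, 0 < p * t + q :=
    (tendsto_atTop_add_const_right _ q (tendsto_id.const_mul_atTop hp)).eventually_gt_atTop 0
  filter_upwards [eventually_gt_atTop 0, hpos] with t ht hpt
  rw [← Real.div_rpow hpt.le ht.le, add_div, mul_div_cancel_right₀ _ ht.ne']

lemma HasPowerTail.comp_affine (hS : HasPowerTail κ S) {p : ℝ} (hp : 0 < p) (q : ℝ) :
    HasPowerTail κ fun t ↦ S (p * t + q) := by
  obtain ⟨c₁, c₂, hc₁, hbounds⟩ := hS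
  have hpκ : 0 < p ^ (-κ) := Real.rpow_pos_of_pos hp _
  have hratio := tendsto_rpow_affine_div_rpow hp q (-κ)
  have hlim : Tendsto (fun t : ℝ ↦ p * t + q) atTop atTop :=
    tendsto_atTop_add_const_right _ q (tendsto_id.const_mul_atTop hp)
  refine ⟨c₁ * (p ^ (-κ) / 2), |c₂| * (2 * p ^ (-κ)), by positivity, ?_⟩
  filter_upwards [hlim.eventually hbounds, hratio.eventually_const_le (half_lt_self hpκ),
    hratio.eventually_le_const (lt_two_mul_self hpκ), eventually_gt_atTop 0,
    hlim.eventually_gt_atTop 0] with t ⟨hlower, hupper⟩ hratio_ge hratio_le ht hpt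
  rw [le_div_iff₀ (by positivity)] at hratio_ge
  rw [div_le_iff₀ (by positivity)] at hratio_le
  refine ⟨le_trans (ENNReal.ofReal_le_ofReal ?_) hlower,
    hupper.trans (ENNReal.ofReal_le_ofReal ?_)⟩
  · rw [mul_assoc]
    gcongr
  · rw [mul_assoc]
    gcongr
    exact le_abs_self c₂

lemma HasPowerTail.exists_bounds (hS : HasPowerTail κ S) :
    ∃ c₁ c₂ t₀ : ℝ, 0 < c₁ ∧ c₁ ≤ c₂ ∧ 0 < t₀ ∧ ∀ t ≥ t₀,
      ENNReal.ofReal (c₁ * t ^ (-κ)) ≤ S t ∧ S t ≤ ENNReal.ofReal (c₂ * t ^ (-κ)) := by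
  obtain ⟨c₁, c₂, hc₁, hbounds⟩ := hS
  obtain ⟨t₀, hbounds⟩ := eventually_atTop.1 hbounds
  refine ⟨c₁, max c₁ c₂, max t₀ 1, hc₁, le_max_left _ _, by positivity, fun t ht ↦ ?_⟩
  obtain ⟨hlower, hupper⟩ := hbounds t ((le_max_left _ _).trans ht)
  have ht₀ : 0 ≤ t := zero_le_one.trans ((le_max_right _ _).trans ht)
  refine ⟨hlower, hupper.trans ?_⟩
  gcongr
  exact le_max_right _ _

end PowerTail

lemma tsum_ofReal_sub_succ {u : ℕ → ℝ} (hu : Antitone u) (hlim : Tendsto u atTop (nhds 0)) :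
    ∑' k, ENNReal.ofReal (u k - u (k + 1)) = ENNReal.ofReal (u 0) := by
  have hnonneg (k : ℕ) : 0 ≤ u k - u (k + 1) := sub_nonneg.2 (hu k.le_succ)
  have hsum : HasSum (fun k ↦ u k - u (k + 1)) (u 0) := by
    rw [hasSum_iff_tendsto_nat_of_nonneg hnonneg]
    simpa only [Finset.sum_range_sub', sub_zero] using hlim.const_sub (u 0)
  rw [← ENNReal.ofReal_tsum_of_nonneg hnonneg hsum.summable, hsum.tsum_eq]

section LogWeight

/-- The weight `1 / (x (log x)^(1+κ))`. -/
noncomputable def logWeight (κ x : ℝ) : ℝ := x⁻¹ * Real.log x ^ (-(1 + κ))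

/-- For `κ > 0` and `x > 1`, the integral of `logWeight κ` over `(x, ∞)`, in closed form. -/
noncomputable def logWeightIntegral (κ x : ℝ) : ℝ := Real.log x ^ (-κ) / κ

/-- `log x + (1 + κ) log log x`, the leading part of `δ d_n` at `x = n`. -/
noncomputable def weightExponent (κ x : ℝ) : ℝ :=
  Real.log x + (1 + κ) * Real.log (Real.log x)

/-- The tail sum of `logWeight κ n` over the `n` with `log n > s`. -/
noncomputable def logWeightTail (κ s : ℝ) : ℝ≥0∞ :=
  ∑' n : ℕ, if s < Real.log n then ENNReal.ofReal (logWeight κ n) else 0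

variable {κ x : ℝ}

lemma logWeight_nonneg (hx : 1 < x) : 0 ≤ logWeight κ x := by
  have := Real.log_pos hx
  unfold logWeight
  positivity

lemma logWeight_eq_exp (hx : 1 < x) : logWeight κ x = Real.exp (-weightExponent κ x) := by
  have hx₀ : 0 < x := one_pos.trans hx
  rw [logWeight, weightExponent, Real.rpow_def_of_pos (Real.log_pos hx), neg_add (Real.log x),
    Real.exp_add, Real.exp_neg (Real.log x), Real.exp_log hx₀, mul_neg, mul_comm (1 + κ)]

lemma antitoneOn_logWeight (hκ : -1 ≤ κ) : AntitoneOn (logWeight κ) (Set.Ioi 1) := by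
  intro x (hx : 1 < x) y _ hxy
  have hx₀ : 0 < x := one_pos.trans hx
  have hlog : 0 < Real.log x := Real.log_pos hx
  have hpow : Real.log y ^ (-(1 + κ)) ≤ Real.log x ^ (-(1 + κ)) :=
    Real.rpow_le_rpow_of_nonpos hlog (Real.log_le_log hx₀ hxy) (by linarith)
  have hpow₀ : 0 ≤ Real.log y ^ (-(1 + κ)) :=
    Real.rpow_nonneg (hlog.le.trans (Real.log_le_log hx₀ hxy)) _
  unfold logWeight
  gcongr

lemma hasDerivAt_logWeightIntegral (hκ : κ ≠ 0) (hx : 1 < x) :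
    HasDerivAt (logWeightIntegral κ) (-logWeight κ x) x := by
  have hlog := Real.hasDerivAt_log (one_pos.trans hx).ne'
  have h := (hlog.rpow_const (p := -κ) (Or.inl (Real.log_pos hx).ne')).div_const κ
  refine h.congr_deriv ?_
  rw [logWeight, show -(1 + κ) = -κ - 1 by ring]
  field_simp

lemma logWeightIntegral_sub_succ_mem_Icc (hκ : 0 < κ) (hx : 1 < x) :
    logWeightIntegral κ x - logWeightIntegral κ (x + 1) ∈
      Set.Icc (logWeight κ (x + 1)) (logWeight κ x) := by
  have hderiv (y : ℝ) (hy : x ≤ y) := hasDerivAt_logWeightIntegral hκ.ne' (hx.trans_le hy)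
  obtain ⟨ξ, ⟨hxξ, hξx⟩, hξ⟩ := exists_hasDerivAt_eq_slope (logWeightIntegral κ) _
    (lt_add_one x) (fun y hy ↦ (hderiv y hy.1).continuousAt.continuousWithinAt)
    (fun y hy ↦ hderiv y hy.1.le)
  have hdiff : logWeightIntegral κ x - logWeightIntegral κ (x + 1) = logWeight κ ξ := by
    rw [add_sub_cancel_left, div_one] at hξ
    linarith
  have hξ₁ : 1 < ξ := hx.trans hxξ
  have hanti := antitoneOn_logWeight (κ := κ) (by linarith)
  rw [hdiff]
  exact ⟨hanti hξ₁ (hξ₁.trans hξx) hξx.le, hanti hx hξ₁ hxξ.le⟩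

lemma tsum_logWeightIntegral_sub (hκ : 0 < κ) (hx : 1 < x) :
    ∑' k : ℕ, ENNReal.ofReal (logWeightIntegral κ (x + k) - logWeightIntegral κ (x + k + 1)) =
      ENNReal.ofReal (logWeightIntegral κ x) := by
  have hxk (k : ℕ) : 1 < x + k := lt_add_of_lt_of_nonneg hx k.cast_nonneg
  have hanti : Antitone fun k : ℕ ↦ logWeightIntegral κ (x + k) := by
    refine antitone_nat_of_succ_le fun k ↦ sub_nonneg.1 ?_
    rw [Nat.cast_succ, ← add_assoc]
    exact (logWeight_nonneg (by linarith [hxk k])).trans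
      (logWeightIntegral_sub_succ_mem_Icc hκ (hxk k)).1
  have hlim : Tendsto (fun k : ℕ ↦ logWeightIntegral κ (x + k)) atTop (nhds 0) := by
    have hatTop : Tendsto (fun k : ℕ ↦ Real.log (x + k)) atTop atTop :=
      Real.tendsto_log_atTop.comp (tendsto_atTop_add_const_left _ x tendsto_natCast_atTop_atTop)
    simpa only [logWeightIntegral, zero_div, Function.comp_def] using
      ((tendsto_rpow_neg_atTop hκ).comp hatTop).div_const κ
  simpa only [Nat.cast_succ, ← add_assoc, Nat.cast_zero, add_zero] using
    tsum_ofReal_sub_succ hanti hlim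

lemma ofReal_logWeightIntegral_le_tsum (hκ : 0 < κ) (hx : 1 < x) :
    ENNReal.ofReal (logWeightIntegral κ x) ≤ ∑' k : ℕ, ENNReal.ofReal (logWeight κ (x + k)) := by
  rw [← tsum_logWeightIntegral_sub hκ hx]
  gcongr with k
  exact (logWeightIntegral_sub_succ_mem_Icc hκ (lt_add_of_lt_of_nonneg hx k.cast_nonneg)).2

lemma tsum_le_ofReal_logWeightIntegral (hκ : 0 < κ) (hx : 1 < x) :
    ∑' k : ℕ, ENNReal.ofReal (logWeight κ (x + k + 1)) ≤
      ENNReal.ofReal (logWeightIntegral κ x) := by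
  rw [← tsum_logWeightIntegral_sub hκ hx]
  gcongr with k
  exact (logWeightIntegral_sub_succ_mem_Icc hκ (lt_add_of_lt_of_nonneg hx k.cast_nonneg)).1

lemma logWeightTail_eq_tsum (κ : ℝ) {s : ℝ} (hs : 0 ≤ s) :
    logWeightTail κ s =
      ∑' k : ℕ, ENNReal.ofReal (logWeight κ (⌊Real.exp s⌋₊ + k + 1)) := by
  set m := ⌊Real.exp s⌋₊
  have hmem (n : ℕ) : s < Real.log n ↔ m < n := by
    rcases n.eq_zero_or_pos with rfl | hn
    · simp [hs]
    · rw [Real.lt_log_iff_exp_lt (by positivity), Nat.floor_lt (Real.exp_pos s).le]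
  have hinj : Function.Injective fun k ↦ m + k + 1 := fun j k hjk ↦ by grind
  have hsupp : Function.support (fun n : ℕ ↦ if m < n then ENNReal.ofReal (logWeight κ n) else 0) ⊆
      Set.range fun k ↦ m + k + 1 := by
    intro n hn
    have hmn : m < n := of_not_not fun h ↦ hn (if_neg h)
    exact ⟨n - (m + 1), by grind⟩
  simp only [logWeightTail, hmem]
  rw [← hinj.tsum_eq hsupp]
  refine tsum_congr fun k ↦ ?_
  rw [if_pos (by grind), Nat.cast_succ, Nat.cast_add]

lemma exp_add_one_le_exp_add_one {s : ℝ} (hs : 0 ≤ s) : Real.exp s + 1 ≤ Real.exp (s + 1) := by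
  rw [Real.exp_add]
  nlinarith [Real.one_le_exp hs, Real.add_one_le_exp 1]

lemma rpow_le_logWeightTail (hκ : 0 < κ) {s : ℝ} (hs : 0 ≤ s) :
    ENNReal.ofReal κ⁻¹ * ENNReal.ofReal ((s + 1) ^ (-κ)) ≤ logWeightTail κ s := by
  set m := ⌊Real.exp s⌋₊ with hm
  have hm₁ : (1 : ℝ) ≤ m := by
    exact_mod_cast Nat.le_floor (by simpa using Real.one_le_exp hs)
  have hlog : Real.log (m + 1) ≤ s + 1 := by
    rw [Real.log_le_iff_le_exp (by positivity)]
    linarith [Nat.floor_le (Real.exp_pos s).le, exp_add_one_le_exp_add_one hs]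
  have hlog₀ : 0 < Real.log (m + 1) := Real.log_pos (by linarith)
  calc
    _ = ENNReal.ofReal ((s + 1) ^ (-κ) / κ) := by
      rw [← ENNReal.ofReal_mul (by positivity), inv_mul_eq_div]
    _ ≤ ENNReal.ofReal (logWeightIntegral κ (m + 1)) := by
      unfold logWeightIntegral
      gcongr ENNReal.ofReal (?_ / κ)
      exact Real.rpow_le_rpow_of_nonpos hlog₀ hlog (by linarith)
    _ ≤ ∑' k : ℕ, ENNReal.ofReal (logWeight κ (m + 1 + k)) :=
      ofReal_logWeightIntegral_le_tsum hκ (by linarith)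
    _ = logWeightTail κ s := by
      simp only [logWeightTail_eq_tsum κ hs, add_right_comm, hm]

lemma logWeightTail_le_rpow (hκ : 0 < κ) {s : ℝ} (hs : 1 < s) :
    logWeightTail κ s ≤ ENNReal.ofReal κ⁻¹ * ENNReal.ofReal ((s - 1) ^ (-κ)) := by
  set m := ⌊Real.exp s⌋₊
  have hexp : Real.exp (s - 1) < m := by
    have h := exp_add_one_le_exp_add_one (sub_pos.2 hs).le
    rw [sub_add_cancel] at h
    linarith [Nat.lt_floor_add_one (Real.exp s)]
  have hm : (1 : ℝ) < m := (Real.one_le_exp (sub_pos.2 hs).le).trans_lt hexp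
  have hlog : s - 1 ≤ Real.log m := (Real.le_log_iff_exp_le (by positivity)).2 hexp.le
  calc
    logWeightTail κ s = ∑' k : ℕ, ENNReal.ofReal (logWeight κ (m + k + 1)) :=
      logWeightTail_eq_tsum κ (zero_lt_one.trans hs).le
    _ ≤ ENNReal.ofReal (logWeightIntegral κ m) := tsum_le_ofReal_logWeightIntegral hκ hm
    _ ≤ ENNReal.ofReal ((s - 1) ^ (-κ) / κ) := by
      unfold logWeightIntegral
      gcongr ENNReal.ofReal (?_ / κ)
      exact Real.rpow_le_rpow_of_nonpos (sub_pos.2 hs) hlog (by linarith)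
    _ = _ := by rw [← ENNReal.ofReal_mul (by positivity), inv_mul_eq_div]

lemma hasPowerTail_logWeightTail (hκ : 0 < κ) : HasPowerTail κ (logWeightTail κ) := by
  have hshift (q : ℝ) : HasPowerTail κ fun s ↦ ENNReal.ofReal ((s + q) ^ (-κ)) := by
    simpa only [one_mul] using (hasPowerTail_rpow κ).comp_affine one_pos q
  refine (hshift 1).of_le_of_le (hshift (-1)) (inv_pos.2 hκ) (inv_pos.2 hκ).le ?_ ?_
  · filter_upwards [eventually_ge_atTop 0] with s hs using rpow_le_logWeightTail hκ hs
  · filter_upwards [eventually_gt_atTop 1] with s hs using logWeightTail_le_rpow hκ hs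

end LogWeight

section ExpTail

/-- The sum of `exp (-y n)` over the `n ≥ 3` with `y n > s`. -/
noncomputable def expTail (y : ℕ → ℝ) (s : ℝ) : ℝ≥0∞ :=
  ∑' n : ℕ, if 3 ≤ n ∧ s < y n then ENNReal.ofReal (Real.exp (-y n)) else 0

variable {κ B s : ℝ} {y : ℕ → ℝ}

lemma one_le_log_natCast_iff {n : ℕ} : 1 ≤ Real.log n ↔ 3 ≤ n := by
  rcases n.eq_zero_or_pos with rfl | hn
  · simp
  rw [Real.le_log_iff_exp_le (by positivity)]
  constructor <;> intro h
  · exact_mod_cast Real.exp_one_gt_two.trans_le h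
  · exact Real.exp_one_lt_three.le.trans (by exact_mod_cast h)

lemma log_le_weightExponent {x : ℝ} (hκ : -1 ≤ κ) (hx : 1 ≤ Real.log x) :
    Real.log x ≤ weightExponent κ x :=
  le_add_of_nonneg_right (mul_nonneg (by linarith) (Real.log_nonneg hx))

lemma weightExponent_le_mul_log {x : ℝ} (hκ : -1 ≤ κ) (hx : 1 ≤ Real.log x) :
    weightExponent κ x ≤ (2 + κ) * Real.log x := by
  have hloglog : Real.log (Real.log x) ≤ Real.log x := Real.log_le_self (by linarith)
  rw [weightExponent]
  nlinarith

lemma mul_logWeightTail_le_expTail (hκ : -1 ≤ κ)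
    (hy : ∀ n : ℕ, 3 ≤ n → |y n - weightExponent κ n| ≤ B) (hs : 1 ≤ s + B) :
    ENNReal.ofReal (Real.exp (-B)) * logWeightTail κ (s + B) ≤ expTail y s := by
  rw [logWeightTail, ← ENNReal.tsum_mul_left, expTail]
  gcongr with n
  split_ifs with hlog hmem hmem
  · obtain ⟨hn, -⟩ := hmem
    have hn₁ : (1 : ℝ) < n := by exact_mod_cast (by lia : 1 < n)
    rw [← ENNReal.ofReal_mul (by positivity), logWeight_eq_exp hn₁, ← Real.exp_add]
    gcongr
    linarith [(abs_le.1 (hy n hn)).2]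
  · have hlog₁ : 1 ≤ Real.log n := hs.trans hlog.le
    have hn : 3 ≤ n := one_le_log_natCast_iff.1 hlog₁
    have := log_le_weightExponent hκ hlog₁
    exact absurd ⟨hn, by linarith [(abs_le.1 (hy n hn)).1]⟩ hmem
  all_goals simp

lemma expTail_le_mul_logWeightTail (hκ : -1 ≤ κ)
    (hy : ∀ n : ℕ, 3 ≤ n → |y n - weightExponent κ n| ≤ B) :
    expTail y s ≤ ENNReal.ofReal (Real.exp B) * logWeightTail κ ((s - B) / (2 + κ)) := by
  rw [logWeightTail, ← ENNReal.tsum_mul_left, expTail]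
  gcongr with n
  split_ifs with hmem hlog hlog
  · obtain ⟨hn, -⟩ := hmem
    have hn₁ : (1 : ℝ) < n := by exact_mod_cast (by lia : 1 < n)
    rw [← ENNReal.ofReal_mul (by positivity), logWeight_eq_exp hn₁, ← Real.exp_add]
    gcongr
    linarith [(abs_le.1 (hy n hn)).1]
  · obtain ⟨hn, hsy⟩ := hmem
    refine absurd ?_ hlog
    rw [div_lt_iff₀' (by linarith)]
    linarith [(abs_le.1 (hy n hn)).2, weightExponent_le_mul_log hκ (one_le_log_natCast_iff.2 hn)]
  all_goals simp

lemma hasPowerTail_expTail (hκ : 0 < κ)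
    (hy : ∀ n : ℕ, 3 ≤ n → |y n - weightExponent κ n| ≤ B) : HasPowerTail κ (expTail y) := by
  have hκ₁ : -1 ≤ κ := by linarith
  have htail := hasPowerTail_logWeightTail hκ
  refine (htail.comp_affine one_pos B).of_le_of_le
    (htail.comp_affine (p := (2 + κ)⁻¹) (by positivity) (-B / (2 + κ)))
    (Real.exp_pos (-B)) (Real.exp_pos B).le ?_ ?_
  · filter_upwards [eventually_ge_atTop (1 - B)] with s hs
    rw [one_mul]
    exact mul_logWeightTail_le_expTail hκ₁ hy (by linarith)
  · refine .of_forall fun s ↦ ?_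
    rw [inv_mul_eq_div, ← add_div, ← sub_eq_add_neg]
    exact expTail_le_mul_logWeightTail hκ₁ hy

end ExpTail

theorem stmt_10_general (ω κ δ : ℝ) (hω : 0 < ω) (hκ : 0 < κ) (hδ : δ = ω / 2)
    (d : ℕ → ℝ) (M : ℝ)
    (hd : ∀ n : ℕ, 3 ≤ n →
      |d n - (2 * Real.log n + 2 * (1 + κ) * Real.log (Real.log n)) / ω| ≤ M / ω) :
    ∃ c₁ c₂ t₀ : ℝ, 0 < c₁ ∧ c₁ ≤ c₂ ∧ 0 < t₀ ∧ ∀ t ≥ t₀,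
      ENNReal.ofReal (c₁ * t ^ (-κ)) ≤
        (∑' n : ℕ, if 3 ≤ n ∧ t < d n then ENNReal.ofReal (Real.exp (-δ * d n)) else 0) ∧
      (∑' n : ℕ, if 3 ≤ n ∧ t < d n then ENNReal.ofReal (Real.exp (-δ * d n)) else 0) ≤
        ENNReal.ofReal (c₂ * t ^ (-κ)) := by
  have hδ₀ : 0 < δ := by linarith
  have hy (n : ℕ) (hn : 3 ≤ n) : |δ * d n - weightExponent κ n| ≤ δ * (M / ω) := by
    have hfactor : δ * d n - weightExponent κ n =
        δ * (d n - (2 * Real.log n + 2 * (1 + κ) * Real.log (Real.log n)) / ω) := by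
      rw [hδ, weightExponent]
      field_simp
    rw [hfactor, abs_mul, abs_of_pos hδ₀]
    gcongr
    exact hd n hn
  have htail := ((hasPowerTail_expTail hκ hy).comp_affine hδ₀ 0).exists_bounds
  simpa only [expTail, add_zero, mul_lt_mul_iff_right₀ hδ₀, neg_mul] using htail

/-- Remark 3 after Theorem 6.2 of the paper: prescribing
`d_n = (2 log n + 2(1+κ) log log n + O(1))/ω` produces the heavy-tail estimate
`Σ_{d_n > t} e^{-δ d_n} ≍ t^{-κ}` for `δ = ω/2`. -/
theorem stmt_10 (ω κ δ : ℝ) (hω : 2 < ω) (hκ : κ ∈ Set.Ioo (1/2 : ℝ) 1) (hδ : δ = ω / 2)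
    (d : ℕ → ℝ) (M : ℝ) (hM : 0 ≤ M)
    (hd : ∀ n : ℕ, 3 ≤ n →
      |d n - (2 * Real.log n + 2 * (1 + κ) * Real.log (Real.log n)) / ω| ≤ M / ω) :
    ∃ c₁ c₂ t₀ : ℝ, 0 < c₁ ∧ c₁ ≤ c₂ ∧ 0 < t₀ ∧ ∀ t ≥ t₀,
      ENNReal.ofReal (c₁ * t ^ (-κ)) ≤
        (∑' n : ℕ, if 3 ≤ n ∧ t < d n then ENNReal.ofReal (Real.exp (-δ * d n)) else 0) ∧
      (∑' n : ℕ, if 3 ≤ n ∧ t < d n then ENNReal.ofReal (Real.exp (-δ * d n)) else 0) ≤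
        ENNReal.ofReal (c₂ * t ^ (-κ)) :=
  stmt_10_general ω κ δ (by linarith) (by linarith [hκ.1]) hδ d M hd
end

section
/- Let (d_n)_{n∈ℕ} be a family of nonnegative reals, δ > 0, κ ∈ (0,1), and let L be a slowly varying function. Assume there exist constants 0 < c₁ ≤ c₂ and t₀ > 0 such that c₁ L(t)/t^κ ≤ Σ_{n : d_n > t} e^{−δ d_n} ≤ c₂ L(t)/t^κ for all t ≥ t₀. Then Σ_n d_n e^{−δ d_n} = +∞. -/
open Filter
open scoped ENNReal

/-!
By Markov's inequality `t * μ {x | t < f x} ≤ ∫⁻ f`, so a tail of size at least `c * L t / t ^ κ`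
gives `c * (L t * t ^ (1 - κ)) ≤ ∫⁻ f`. As `L` varies slowly and `κ < 1`, the left-hand side grows
along `t = r ^ k` by a factor tending to `r ^ (1 - κ) > 1`, hence is unbounded. Working along a
geometric sequence avoids the uniform convergence theorem for slowly varying functions.
-/

open MeasureTheory Topology

theorem tendsto_atTop_of_tendsto_succ_div {u : ℕ → ℝ} {l : ℝ} (hu : ∀ᶠ k in atTop, 0 < u k)
    (hl : 1 < l) (h : Tendsto (fun k => u (k + 1) / u k) atTop (𝓝 l)) :
    Tendsto u atTop atTop := by
  obtain ⟨q, hq, hql⟩ := exists_between hl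
  obtain ⟨N, hN⟩ := eventually_atTop.1 (hu.and (h.eventually (lt_mem_nhds hql)))
  have growth (k : ℕ) : q * u (k + N) ≤ u (k + 1 + N) := by
    obtain ⟨hpos, hratio⟩ := hN (k + N) (Nat.le_add_left N k)
    rw [Nat.add_right_comm]
    exact ((lt_div_iff₀ hpos).1 hratio).le
  refine (tendsto_add_atTop_iff_nat N).1 (tendsto_atTop_of_geom_le ?_ hq growth)
  simpa only [zero_add] using (hN N le_rfl).1

theorem tendsto_slowlyVarying_mul_rpow_comp_pow {L : ℝ → ℝ} {r ρ : ℝ}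
    (hLpos : ∀ᶠ t in atTop, 0 < L t) (hr : 1 < r)
    (hLr : Tendsto (fun t => L (r * t) / L t) atTop (𝓝 1)) (hρ : 0 < ρ) :
    Tendsto (fun k : ℕ => L (r ^ k) * (r ^ k) ^ ρ) atTop atTop := by
  have hpow : Tendsto (fun k : ℕ => r ^ k) atTop atTop := tendsto_pow_atTop_atTop_of_one_lt hr
  have hr₀ : 0 < r := zero_lt_one.trans hr
  refine tendsto_atTop_of_tendsto_succ_div ?_ (Real.one_lt_rpow hr hρ) ?_
  · filter_upwards [hpow.eventually hLpos] with k hk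
    positivity
  · have hlim := (hLr.comp hpow).mul_const (r ^ ρ)
    rw [one_mul] at hlim
    refine hlim.congr fun k => ?_
    have hk : (r ^ k) ^ ρ ≠ 0 := by positivity
    rw [Function.comp_apply, pow_succ', Real.mul_rpow hr₀.le (by positivity)]
    field_simp

theorem lintegral_ofReal_eq_top_of_le_meas_lt {α : Type*} [MeasurableSpace α] {μ : Measure α}
    {f : α → ℝ} (hf : AEMeasurable f μ) {L : ℝ → ℝ} {r κ c : ℝ}
    (hLpos : ∀ᶠ t in atTop, 0 < L t) (hr : 1 < r)
    (hLr : Tendsto (fun t => L (r * t) / L t) atTop (𝓝 1)) (hκ : κ < 1) (hc : 0 < c)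
    (htail : ∀ᶠ t in atTop, ENNReal.ofReal (c * (L t / t ^ κ)) ≤ μ {x | t < f x}) :
    ∫⁻ x, ENNReal.ofReal (f x) ∂μ = ⊤ := by
  have lower_bound : ∀ᶠ t in atTop,
      ENNReal.ofReal (c * (L t * t ^ (1 - κ))) ≤ ∫⁻ x, ENNReal.ofReal (f x) ∂μ := by
    filter_upwards [htail, eventually_gt_atTop 0] with t ht ht₀
    calc ENNReal.ofReal (c * (L t * t ^ (1 - κ)))
        = ENNReal.ofReal t * ENNReal.ofReal (c * (L t / t ^ κ)) := by
          rw [← ENNReal.ofReal_mul ht₀.le, Real.rpow_sub ht₀, Real.rpow_one]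
          ring_nf
      _ ≤ ENNReal.ofReal t * μ {x | ENNReal.ofReal t ≤ ENNReal.ofReal (f x)} := by
          gcongr
          exact ht.trans (measure_mono fun x (hx : t < f x) => ENNReal.ofReal_le_ofReal hx.le)
      _ ≤ ∫⁻ x, ENNReal.ofReal (f x) ∂μ := mul_meas_ge_le_lintegral₀ hf.ennreal_ofReal _
  have hlim : Tendsto (fun k : ℕ => ENNReal.ofReal (c * (L (r ^ k) * (r ^ k) ^ (1 - κ))))
      atTop (𝓝 ⊤) :=
    ENNReal.tendsto_ofReal_atTop.comp <|
      (tendsto_slowlyVarying_mul_rpow_comp_pow hLpos hr hLr (sub_pos.2 hκ)).const_mul_atTop hc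
  exact top_le_iff.1 <| le_of_tendsto hlim <|
    (tendsto_pow_atTop_atTop_of_one_lt hr).eventually lower_bound

/-- `ENNReal.ofReal` truncates at `0`, so only the positive parts of the `d i` are summed. -/
theorem stmt_12_general {ι : Type*} {d : ι → ℝ} {w : ι → ℝ≥0∞} {L : ℝ → ℝ}
    {r κ c : ℝ} (hLpos : ∀ᶠ t in atTop, 0 < L t) (hr : 1 < r)
    (hLr : Tendsto (fun t => L (r * t) / L t) atTop (𝓝 1)) (hκ : κ < 1) (hc : 0 < c)
    (htail : ∀ᶠ t in atTop,
      ENNReal.ofReal (c * (L t / t ^ κ)) ≤ ∑' i, if t < d i then w i else 0) :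
    ∑' i, ENNReal.ofReal (d i) * w i = ⊤ := by
  let _ : MeasurableSpace ι := ⊤
  let μ : Measure ι := Measure.sum fun i => w i • Measure.dirac i
  have meas_lt (t : ℝ) : μ {i | t < d i} = ∑' i, if t < d i then w i else 0 := by
    simp [μ, Set.indicator_apply]
  have lintegral_eq : ∫⁻ i, ENNReal.ofReal (d i) ∂μ = ∑' i, ENNReal.ofReal (d i) * w i := by
    simp [μ, lintegral_sum_measure, mul_comm]
  rw [← lintegral_eq]
  apply lintegral_ofReal_eq_top_of_le_meas_lt measurable_from_top.aemeasurable hLpos hr hLr hκ hc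
  simpa only [meas_lt] using htail

/-- Remark 4 after Theorem 6.2 of the paper: the heavy-tail bounds
`c₁ L(t)/t^κ ≤ Σ_{d_n>t} e^{-δ d_n} ≤ c₂ L(t)/t^κ` with `κ < 1` force
`Σ_n d_n e^{-δ d_n} = ∞`. -/
theorem stmt_12 (d : ℕ → ℝ) (hd : ∀ n, 0 ≤ d n) (δ : ℝ) (hδ : 0 < δ)
    (κ : ℝ) (hκ : κ ∈ Set.Ioo (0:ℝ) 1)
    (L : ℝ → ℝ) (hLpos : ∀ t > 0, 0 < L t) (hLmeas : Measurable L)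
    (hLslow : ∀ lam > 0, Tendsto (fun t => L (lam * t) / L t) atTop (nhds 1))
    (c₁ c₂ t₀ : ℝ) (hc₁ : 0 < c₁) (hc : c₁ ≤ c₂) (ht₀ : 0 < t₀)
    (hbound : ∀ t ≥ t₀,
      ENNReal.ofReal (c₁ * (L t / t ^ κ)) ≤
        (∑' n : ℕ, if t < d n then ENNReal.ofReal (Real.exp (-δ * d n)) else 0) ∧
      (∑' n : ℕ, if t < d n then ENNReal.ofReal (Real.exp (-δ * d n)) else 0) ≤
        ENNReal.ofReal (c₂ * (L t / t ^ κ))) :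
    (∑' n : ℕ, ENNReal.ofReal (d n * Real.exp (-δ * d n))) = ⊤ := by
  simpa only [ENNReal.ofReal_mul (hd _)] using
    stmt_12_general ((eventually_gt_atTop 0).mono hLpos) one_lt_two (hLslow 2 two_pos) hκ.2 hc₁
      ((eventually_ge_atTop t₀).mono fun t ht => (hbound t ht).1)
end
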